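/- arXiv:0911.1019 — 2 statements merged into one kernel-verified Lean document; each statement's English description precedes it below -/
import Mathlib

section
/- Let n ≥ 1 be a natural number, let a ∈ Λ_n, and let u be a nontrivial solution of the periodic problem u'' + a(x)u = 0 on (0,T), u(0) = u(T), u'(0) = u'(T), normalized so that u(0) = u(T) = 0. Then the set of zeros of u in [0,T) is finite, its cardinality m is an even number, and m ≥ 2(n+1). -/
open MeasureTheory Set Real

/-- `u` is a solution of `u'' + a·u = 0` on `[c,d]`, with derivative function `v`. -/
def IsSolOn (a u v : ℝ → ℝ) (c d : ℝ) : Prop :=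
  (∀ x ∈ Set.Icc c d, HasDerivWithinAt u (v x) (Set.Icc c d) x) ∧
  (∀ x ∈ Set.Icc c d, v x = v c - ∫ t in c..x, a t * u t)

/-- Membership in `L_T`: measurable, `T`-periodic and integrable on `[0,T]`. -/
def MemLT (T : ℝ) (a : ℝ → ℝ) : Prop :=
  Measurable a ∧ (∀ x, a (x + T) = a x) ∧ IntegrableOn a (Set.Icc 0 T)

/-- `c ≺ d` : `c ≤ d` a.e. on `[0,T]` and `c < d` on a set of positive measure. -/
def Prec (T : ℝ) (c d : ℝ → ℝ) : Prop :=
  (∀ᵐ x ∂(volume.restrict (Set.Icc 0 T)), c x ≤ d x) ∧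
  0 < volume {x ∈ Set.Icc 0 T | c x < d x}

/-- `(u,v)` solves the periodic problem `u'' + a u = 0`, `u(0)=u(T)`, `u'(0)=u'(T)`. -/
def PeriodicSol (T : ℝ) (a u v : ℝ → ℝ) : Prop :=
  IsSolOn a u v 0 T ∧ u 0 = u T ∧ v 0 = v T

/-- `(u,v)` solves the antiperiodic problem `u'' + a u = 0`, `u(0)+u(T)=0`, `u'(0)+u'(T)=0`. -/
def AntiperiodicSol (T : ℝ) (a u v : ℝ → ℝ) : Prop :=
  IsSolOn a u v 0 T ∧ u 0 + u T = 0 ∧ v 0 + v T = 0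

/-- The `(2n-1)`-st periodic eigenvalue `λ_{2n-1} = 4 n² π² / T²`. -/
noncomputable def lam (T : ℝ) (n : ℕ) : ℝ := 4 * (n : ℝ) ^ 2 * Real.pi ^ 2 / T ^ 2

/-- The `(2n-1)`-st antiperiodic eigenvalue `λ̃_{2n-1} = (2n-1)² π² / T²`. -/
noncomputable def lamT (T : ℝ) (n : ℕ) : ℝ := (2 * (n : ℝ) - 1) ^ 2 * Real.pi ^ 2 / T ^ 2

/-- The set `Λ_n`. -/
def LambdaN (T : ℝ) (n : ℕ) : Set (ℝ → ℝ) :=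
  {a | MemLT T a ∧ Prec T (fun _ => lam T n) a ∧
    ∃ u v : ℝ → ℝ, PeriodicSol T a u v ∧ ∃ x ∈ Set.Icc 0 T, u x ≠ 0}

/-- The set `Λ̃_n`. -/
def LambdaTildeN (T : ℝ) (n : ℕ) : Set (ℝ → ℝ) :=
  {a | MemLT T a ∧ Prec T (fun _ => lamT T n) a ∧
    ∃ u v : ℝ → ℝ, AntiperiodicSol T a u v ∧ ∃ x ∈ Set.Icc 0 T, u x ≠ 0}

/-- The constant `β_{1,n}` of the periodic `L¹` Lyapunov inequality. -/
noncomputable def beta1 (T : ℝ) (n : ℕ) : ℝ :=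
  8 * Real.pi * (n : ℝ) * ((n : ℝ) + 1) / T * Real.cot ((n : ℝ) * Real.pi / (2 * ((n : ℝ) + 1)))

/-- The constant `β̃_{1,n}` of the antiperiodic `L¹` Lyapunov inequality. -/
noncomputable def betaT1 (T : ℝ) (n : ℕ) : ℝ :=
  2 * Real.pi * (2 * (n : ℝ) - 1) * (2 * (n : ℝ) + 1) / T *
    Real.cot ((2 * (n : ℝ) - 1) * Real.pi / (2 * (2 * (n : ℝ) + 1)))


/-- Working data: regularity of `u, w` with `w = u'`. -/
structure Good (T : ℝ) (a u w : ℝ → ℝ) : Prop where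
  acu : AbsolutelyContinuousOnInterval u 0 T
  acw : AbsolutelyContinuousOnInterval w 0 T
  du : ∀ x ∈ Icc 0 T, HasDerivWithinAt u (w x) (Icc 0 T) x
  dw : ∀ᵐ x, x ∈ Icc 0 T → HasDerivAt w (-(a x * u x)) x

lemma ac_const (k c d : ℝ) : AbsolutelyContinuousOnInterval (fun _ => k) c d :=
  (contDiffOn_const).absolutelyContinuousOnInterval

lemma ac_exp {f : ℝ → ℝ} {c d : ℝ} (hf : AbsolutelyContinuousOnInterval f c d) :
    AbsolutelyContinuousOnInterval (fun x => Real.exp (f x)) c d := by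
  obtain ⟨C, hC⟩ := hf.exists_bound
  obtain ⟨K, hK⟩ := (Real.contDiff_exp (n := 1)).contDiffOn.exists_lipschitzOnWith (s := Icc (-C) C)
    (by decide) (convex_Icc _ _) isCompact_Icc
  rw [absolutelyContinuousOnInterval_iff] at hf ⊢
  intro ε hε
  obtain ⟨δ, hδ, h⟩ := hf (ε / (K + 1)) (by positivity)
  refine ⟨δ, hδ, fun E hE hl => ?_⟩
  have h1 := h E hE hl
  have hmem := hE.1
  calc _ ≤ ∑ i ∈ Finset.range E.1, K * dist (f (E.2 i).1) (f (E.2 i).2) := by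
        apply Finset.sum_le_sum
        intro i hi
        have := hmem i hi
        exact hK.dist_le_mul _ (abs_le.1 (hC _ this.1)) _ (abs_le.1 (hC _ this.2))
    _ = K * ∑ i ∈ Finset.range E.1, dist (f (E.2 i).1) (f (E.2 i).2) := by
        rw [Finset.mul_sum]
    _ ≤ (K + 1) * ∑ i ∈ Finset.range E.1, dist (f (E.2 i).1) (f (E.2 i).2) := by
        gcongr
        simp
    _ < (K + 1) * (ε / (K + 1)) := by gcongr
    _ = ε := by field_simp

lemma ac_anti {f : ℝ → ℝ} {c d : ℝ} (hcd : c ≤ d) (hf : AbsolutelyContinuousOnInterval f c d)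
    (h : ∀ᵐ x, x ∈ Ioo c d → deriv f x ≤ 0) : f d ≤ f c := by
  have h1 := hf.integral_deriv_eq_sub
  have h2 : 0 ≤ ∫ x in c..d, -deriv f x := by
    apply intervalIntegral.integral_nonneg_of_ae_restrict hcd
    rw [Filter.EventuallyLE, ← Measure.restrict_congr_set Ioo_ae_eq_Icc,
      ae_restrict_iff' measurableSet_Ioo]
    filter_upwards [h] with x hx hx'
    simpa using hx hx'
  rw [intervalIntegral.integral_neg, h1] at h2
  linarith

lemma Good.hd {T : ℝ} {a u w : ℝ → ℝ} (h : Good T a u w) {x : ℝ} (hx : x ∈ Ioo 0 T) :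
    HasDerivAt u (w x) x :=
  (h.du x ⟨hx.1.le, hx.2.le⟩).hasDerivAt (Icc_mem_nhds hx.1 hx.2)

lemma uIcc_sub {T c d : ℝ} (hc : 0 ≤ c) (hcd : c ≤ d) (hd : d ≤ T) : uIcc c d ⊆ uIcc 0 T := by
  rw [uIcc_of_le hcd, uIcc_of_le (by linarith)]
  exact Icc_subset_Icc hc hd

lemma Good.unique {T : ℝ} {a u w : ℝ → ℝ} (h : Good T a u w) (hT : 0 < T)
    (hai : IntervalIntegrable a volume 0 T)
    {x₀ : ℝ} (hx₀ : x₀ ∈ Icc 0 T) (hu : u x₀ = 0) (hw : w x₀ = 0) :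
    ∀ x ∈ Icc 0 T, u x = 0 := by
  set k : ℝ → ℝ := fun t => 1 + |a t| with hk
  have hki : IntervalIntegrable k volume 0 T := intervalIntegrable_const.add hai.abs
  set A : ℝ → ℝ := fun x => ∫ t in (0:ℝ)..x, k t with hA
  have acA : AbsolutelyContinuousOnInterval A 0 T :=
    hki.absolutelyContinuousOnInterval_intervalIntegral (by simp)
  have dA : ∀ᵐ x, x ∈ uIcc 0 T → HasDerivAt A (k x) x := by
    filter_upwards [hki.ae_hasDerivAt_integral] with x hx hx'
    exact hx hx' 0 (by simp)
  rw [uIcc_of_le hT.le] at dA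
  set E : ℝ → ℝ := fun x => u x * u x + w x * w x with hE
  have acE : AbsolutelyContinuousOnInterval E 0 T :=
    (h.acu.fun_mul h.acu).fun_add (h.acw.fun_mul h.acw)
  have key : ∀ p q y : ℝ, |(2 * p * q) - 2 * (y * p) * q| ≤ (1 + |y|) * (p * p + q * q) := by
    intro p q y
    have e1 : (2 * p * q) - 2 * (y * p) * q = (1 - y) * (2 * p * q) := by ring
    rw [e1, abs_mul]
    gcongr
    · exact (abs_sub _ _).trans (by simp)
    · rw [abs_le]; constructor <;> nlinarith [sq_nonneg (p - q), sq_nonneg (p + q)]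
  have dE : ∀ᵐ x, x ∈ Ioo 0 T → ∃ E', HasDerivAt E E' x ∧ |E'| ≤ k x * E x := by
    filter_upwards [h.dw] with x hw hx
    have hu := h.hd hx
    have hw := hw ⟨hx.1.le, hx.2.le⟩
    refine ⟨_, (hu.mul hu).add (hw.mul hw), ?_⟩
    convert key (u x) (w x) (a x) using 2
    ring
  have E0 : E x₀ = 0 := by simp [hE, hu, hw]
  have fin : ∀ x, E x ≤ 0 → u x = 0 := by
    intro x hx
    have : u x * u x + w x * w x ≤ 0 := hx
    nlinarith [mul_self_nonneg (u x), mul_self_nonneg (w x)]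
  intro x hx
  apply fin
  rcases le_total x₀ x with hxx | hxx
  · have := ac_anti hxx (((acE.fun_mul (ac_exp acA.fun_neg))).mono (uIcc_sub hx₀.1 hxx hx.2)) (by
      filter_upwards [dA, dE] with y hA hE hy
      have hy' : y ∈ Ioo 0 T := ⟨hx₀.1.trans_lt hy.1, hy.2.trans_le hx.2⟩
      obtain ⟨E', hE1, hE2⟩ := hE hy'
      have hA := hA ⟨hy'.1.le, hy'.2.le⟩
      rw [(hE1.fun_mul hA.fun_neg.exp).deriv]
      have := (abs_le.1 hE2).2
      have e := Real.exp_pos (-A y)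
      nlinarith)
    rw [E0, zero_mul] at this
    have e := Real.exp_pos (-A x)
    by_contra hc
    push Not at hc
    nlinarith [mul_pos hc e]
  · have := ac_anti hxx (((acE.fun_mul (ac_exp acA)).fun_neg).mono (uIcc_sub hx.1 hxx hx₀.2)) (by
      filter_upwards [dA, dE] with y hA hE hy
      have hy' : y ∈ Ioo 0 T := ⟨hx.1.trans_lt hy.1, hy.2.trans_le hx₀.2⟩
      obtain ⟨E', hE1, hE2⟩ := hE hy'
      have hA := hA ⟨hy'.1.le, hy'.2.le⟩
      rw [(hE1.fun_mul hA.exp).fun_neg.deriv]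
      have := (abs_le.1 hE2).1
      have e := Real.exp_pos (A y)
      nlinarith)
    rw [E0, zero_mul] at this
    have e := Real.exp_pos (A x)
    by_contra hc
    push Not at hc
    nlinarith [mul_pos hc e]

lemma Good.gap {T : ℝ} {a u w : ℝ → ℝ} (h : Good T a u w) {ω : ℝ} (hω : 0 < ω)
    (hle : ∀ᵐ x, x ∈ Icc 0 T → ω ^ 2 ≤ a x) {c d s : ℝ} (hc : 0 ≤ c) (hcd : c < d) (hd : d ≤ T)
    (uc : u c = 0) (ud : u d = 0) (hs : ∀ x ∈ Ioo c d, 0 < s * u x)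
    (hlen : π / ω ≤ d - c) :
    d - c = π / ω ∧ ∀ᵐ x, x ∈ Icc c d → a x = ω ^ 2 := by
  obtain ⟨e, he⟩ : ∃ e, e = c + π / ω := ⟨_, rfl⟩
  have hp : 0 < π / ω := div_pos pi_pos hω
  have hce : c < e := by linarith
  have hed : e ≤ d := by linarith
  have hωe : ω * (e - c) = π := by rw [he]; field_simp; ring
  set W : ℝ → ℝ := fun x => s * (w x * Real.sin (ω * (x - c)) - u x * (ω * Real.cos (ω * (x - c))))
    with hW
  have sub := uIcc_sub hc hce.le (hed.trans hd)
  have acW : AbsolutelyContinuousOnInterval W c e := by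
    refine AbsolutelyContinuousOnInterval.const_mul s
      (((h.acw.mono sub).fun_mul ?_).fun_sub ((h.acu.mono sub).fun_mul ?_))
    · exact ContDiffOn.absolutelyContinuousOnInterval (ContDiff.contDiffOn (by fun_prop))
    · exact ContDiffOn.absolutelyContinuousOnInterval (ContDiff.contDiffOn (by fun_prop))
  have dW : ∀ᵐ x, x ∈ Ioo c e →
      deriv W x = -((a x - ω ^ 2) * (s * u x) * Real.sin (ω * (x - c))) := by
    filter_upwards [h.dw] with x hw hx
    have hx' : x ∈ Ioo 0 T := ⟨hc.trans_lt hx.1, hx.2.trans_le (hed.trans hd)⟩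
    have hu := h.hd hx'
    have hw := hw ⟨hx'.1.le, hx'.2.le⟩
    have hl : HasDerivAt (fun x => ω * (x - c)) ω x := by
      simpa using ((hasDerivAt_id x).sub_const c).const_mul ω
    have := ((hw.fun_mul hl.sin).fun_sub (hu.fun_mul (hl.cos.const_mul ω))).const_mul s
    rw [hW, this.deriv]
    ring
  have sinpos : ∀ x ∈ Ioo c e, 0 < Real.sin (ω * (x - c)) := by
    intro x hx
    apply Real.sin_pos_of_pos_of_lt_pi
    · exact mul_pos hω (by linarith [hx.1])
    · rw [← hωe]; gcongr; exact hx.2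
  have dW' : ∀ᵐ x, x ∈ Ioo c e → 0 ≤ -deriv W x := by
    filter_upwards [dW, hle] with x h1 h2 hx
    have h2 := h2 ⟨hc.trans hx.1.le, hx.2.le.trans (hed.trans hd)⟩
    rw [h1 hx, neg_neg]
    exact mul_nonneg (mul_nonneg (by linarith) (hs x ⟨hx.1, hx.2.trans_le hed⟩).le)
      (sinpos x hx).le
  have hint := acW.integral_deriv_eq_sub
  have hWc : W c = 0 := by simp [hW, uc]
  have hWe : W e = ω * (s * u e) := by simp [hW, hωe]; ring
  have hsue : 0 ≤ s * u e := by
    rcases hed.eq_or_lt with h1 | h1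
    · rw [h1, ud, mul_zero]
    · exact (hs e ⟨hce, h1⟩).le
  have hnn : 0 ≤ᵐ[volume.restrict (Ioc c e)] fun x => -deriv W x := by
    rw [Filter.EventuallyLE, ← Measure.restrict_congr_set Ioo_ae_eq_Ioc,
      ae_restrict_iff' measurableSet_Ioo]
    exact dW'
  have hI0 : 0 ≤ ∫ x in c..e, -deriv W x := by
    rw [intervalIntegral.integral_of_le hce.le]
    exact integral_nonneg_of_ae hnn
  have hII : ∫ x in c..e, -deriv W x = -(ω * (s * u e)) := by
    rw [intervalIntegral.integral_neg, hint, hWc, hWe]; ring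
  have hz : s * u e = 0 := by
    rw [hII] at hI0
    have := mul_nonneg hω.le hsue
    have : ω * (s * u e) = 0 := by linarith
    exact (mul_eq_zero.1 this).resolve_left hω.ne'
  have hde : e = d := by
    rcases hed.eq_or_lt with h1 | h1
    · exact h1
    · exact absurd hz (hs e ⟨hce, h1⟩).ne'
  refine ⟨by linarith, ?_⟩
  rw [hz, mul_zero, neg_zero] at hII
  have hzero := (intervalIntegral.integral_eq_zero_iff_of_le_of_nonneg_ae hce.le hnn
    acW.intervalIntegrable_deriv.neg).1 hII
  rw [Filter.EventuallyEq, ← Measure.restrict_congr_set Ioo_ae_eq_Ioc,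
      ae_restrict_iff' measurableSet_Ioo] at hzero
  have hcne : ∀ᵐ x : ℝ, x ≠ c := by simp [ae_iff, measure_singleton]
  have hdne : ∀ᵐ x : ℝ, x ≠ d := by simp [ae_iff, measure_singleton]
  filter_upwards [hzero, dW, hcne, hdne] with x h1 h2 h3 h4 hx
  have hx' : x ∈ Ioo c e := ⟨lt_of_le_of_ne hx.1 h3.symm, hde ▸ lt_of_le_of_ne hx.2 h4⟩
  have h1 := h1 hx'
  rw [h2 hx'] at h1
  have p1 := (hs x (hde ▸ hx')).ne'
  have p2 := (sinpos x hx').ne'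
  simp only [neg_neg, Pi.zero_apply, mul_eq_zero, p1, p2, or_false] at h1
  have : a x - ω ^ 2 = 0 := by simpa [p1] using h1
  linarith

lemma Good.sign {T : ℝ} {a u w : ℝ → ℝ} (h : Good T a u w)
    {c d : ℝ} (hc : 0 ≤ c) (hcd : c < d) (hd : d ≤ T)
    (hne : ∀ x ∈ Ioo c d, u x ≠ 0) : ∃ s : ℝ, ∀ x ∈ Ioo c d, 0 < s * u x := by
  refine ⟨u ((c + d) / 2), fun x hx => ?_⟩
  have hm : (c + d) / 2 ∈ Ioo c d := ⟨by linarith, by linarith⟩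
  have hcont : ContinuousOn u (Ioo c d) := fun y hy =>
    (h.hd ⟨hc.trans_lt hy.1, hy.2.trans_le hd⟩).continuousAt.continuousWithinAt
  have hoc := (isPreconnected_Ioo.image u hcont).ordConnected
  have hz : (0 : ℝ) ∉ u '' Ioo c d := by
    rintro ⟨y, hy, h0⟩
    exact hne y hy h0
  have m1 := mem_image_of_mem u hx
  have m2 := mem_image_of_mem u hm
  rcases lt_or_gt_of_ne (hne x hx) with p | p <;> rcases lt_or_gt_of_ne (hne _ hm) with q | q
  · exact mul_pos_of_neg_of_neg q p
  · exact absurd (hoc.out m1 m2 ⟨p.le, q.le⟩) hz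
  · exact absurd (hoc.out m2 m1 ⟨q.le, p.le⟩) hz
  · exact mul_pos q p

lemma Good.left {T : ℝ} {a u w : ℝ → ℝ} (h : Good T a u w)
    {c d s : ℝ} (hc : 0 ≤ c) (hcd : c < d) (hd : d ≤ T) (uc : u c = 0)
    (hs : ∀ x ∈ Ioo c d, 0 < s * u x) : 0 ≤ s * w c := by
  have h1 : HasDerivWithinAt (fun x => s * u x) (s * w c) (Ioo c d) c :=
    ((h.du c ⟨hc, by linarith⟩).mono
      (fun y hy => ⟨hc.trans hy.1.le, hy.2.le.trans hd⟩)).const_mul s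
  rw [hasDerivWithinAt_iff_tendsto_slope' (by simp)] at h1
  haveI := left_nhdsWithin_Ioo_neBot hcd
  refine ge_of_tendsto h1 ?_
  filter_upwards [self_mem_nhdsWithin] with y hy
  rw [slope_def_field, uc, mul_zero, sub_zero]
  exact div_nonneg (hs y hy).le (by linarith [hy.1])

lemma Good.right {T : ℝ} {a u w : ℝ → ℝ} (h : Good T a u w)
    {c d s : ℝ} (hc : 0 ≤ c) (hcd : c < d) (hd : d ≤ T) (ud : u d = 0)
    (hs : ∀ x ∈ Ioo c d, 0 < s * u x) : s * w d ≤ 0 := by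
  have h1 : HasDerivWithinAt (fun x => s * u x) (s * w d) (Ioo c d) d :=
    ((h.du d ⟨by linarith, hd⟩).mono
      (fun y hy => ⟨hc.trans hy.1.le, hy.2.le.trans hd⟩)).const_mul s
  rw [hasDerivWithinAt_iff_tendsto_slope' (by simp)] at h1
  haveI := right_nhdsWithin_Ioo_neBot hcd
  refine le_of_tendsto h1 ?_
  filter_upwards [self_mem_nhdsWithin] with y hy
  rw [slope_def_field, ud, mul_zero, sub_zero]
  exact div_nonpos_of_nonneg_of_nonpos (hs y hy).le (by linarith [hy.2])

lemma Good.finite {T : ℝ} {a u w : ℝ → ℝ} (h : Good T a u w)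
    (hsim : ∀ x ∈ Icc 0 T, u x = 0 → w x ≠ 0) : (Icc 0 T ∩ {x | u x = 0}).Finite := by
  by_contra hinf
  obtain ⟨x, hx, hacc⟩ := Set.Infinite.exists_accPt_of_subset_isCompact hinf
    (isCompact_Icc (a := (0:ℝ)) (b := T)) inter_subset_left
  have hcont : ContinuousOn u (Icc 0 T) := fun y hy => (h.du y hy).continuousWithinAt
  have hcl : IsClosed (Icc 0 T ∩ {x | u x = 0}) :=
    hcont.preimage_isClosed_of_isClosed isClosed_Icc (isClosed_singleton (x := (0:ℝ)))
  have hxz := hcl.closure_subset (hacc.clusterPt.mem_closure)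
  have hne := (h.du x hx).eventually_ne (c := 0) (hsim x hx hxz.2)
  rw [accPt_iff_frequently] at hacc
  rw [eventually_nhdsWithin_iff] at hne
  obtain ⟨y, ⟨h1, h2, h3⟩, h4⟩ := (hacc.and_eventually hne).exists
  exact h4 ⟨h2, h1⟩ h3

lemma Good.step {T : ℝ} {a u w : ℝ → ℝ} (h : Good T a u w) {ω : ℝ} (hω : 0 < ω)
    (hle : ∀ᵐ x, x ∈ Icc 0 T → ω ^ 2 ≤ a x)
    (hsim : ∀ x ∈ Icc 0 T, u x = 0 → w x ≠ 0) (h0 : u 0 = 0)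
    (Z : Finset ℝ) (hZ : ∀ x, x ∈ Z ↔ x ∈ Icc 0 T ∧ u x = 0) (k : ℕ) :
    ∀ x ∈ Z, (Z.filter (· < x)).card = k →
      0 < w 0 * w x * (-1) ^ k ∧ x ≤ k * (π / ω) ∧
      (x = k * (π / ω) → ∀ᵐ t, t ∈ Icc 0 x → a t = ω ^ 2) := by
  induction k with
  | zero =>
    intro x hx hcard
    have hx' := (hZ x).1 hx
    have x0 : x = 0 := by
      by_contra hne
      have hmem : (0:ℝ) ∈ Z.filter (· < x) := by
        rw [Finset.mem_filter, hZ]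
        exact ⟨⟨⟨le_rfl, hx'.1.1.trans hx'.1.2⟩, h0⟩, lt_of_le_of_ne hx'.1.1 (Ne.symm hne)⟩
      rw [Finset.card_eq_zero] at hcard
      rw [hcard] at hmem
      simp at hmem
    subst x0
    refine ⟨?_, by simp, fun _ => ?_⟩
    · have := hsim 0 hx'.1 h0
      simpa using mul_self_pos.2 this
    · have hcne : ∀ᵐ x : ℝ, x ≠ 0 := by simp [ae_iff, measure_singleton]
      filter_upwards [hcne] with t ht ht'
      exact absurd (le_antisymm ht'.2 ht'.1) ht
  | succ k ih =>
    intro x hx hcard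
    have hx' := (hZ x).1 hx
    have hne : (Z.filter (· < x)).Nonempty := by
      rw [← Finset.card_pos, hcard]; omega
    obtain ⟨y, hy⟩ : ∃ y, y = (Z.filter (· < x)).max' hne := ⟨_, rfl⟩
    have hymem : y ∈ Z.filter (· < x) := hy ▸ Finset.max'_mem _ _
    have hymax : ∀ z ∈ Z, z < x → z ≤ y := fun z hz hzx =>
      hy ▸ Finset.le_max' _ _ (Finset.mem_filter.2 ⟨hz, hzx⟩)
    obtain ⟨hyZ, hyx⟩ := Finset.mem_filter.1 hymem
    have hyc : (Z.filter (· < y)).card = k := by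
      have : Z.filter (· < y) = (Z.filter (· < x)).erase y := by
        ext z
        simp only [Finset.mem_filter, Finset.mem_erase]
        constructor
        · rintro ⟨hz, hzy⟩
          exact ⟨hzy.ne, hz, hzy.trans hyx⟩
        · rintro ⟨hzy, hz, hzx⟩
          exact ⟨hz, lt_of_le_of_ne (hymax z hz hzx) hzy⟩
      rw [this, Finset.card_erase_of_mem hymem, hcard]
      simp
    obtain ⟨i1, i2, i3⟩ := ih y hyZ hyc
    have hy' := (hZ y).1 hyZ
    have hfree : ∀ z ∈ Ioo y x, u z ≠ 0 := by
      intro z hz hz0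
      have := hymax z ((hZ z).2 ⟨⟨hy'.1.1.trans hz.1.le, hz.2.le.trans hx'.1.2⟩, hz0⟩) hz.2
      linarith [hz.1]
    obtain ⟨s, hs⟩ := h.sign hy'.1.1 hyx hx'.1.2 hfree
    have l1 := h.left hy'.1.1 hyx hx'.1.2 hy'.2 hs
    have l2 := h.right hy'.1.1 hyx hx'.1.2 hx'.2 hs
    have s0 : s ≠ 0 := by
      rintro rfl
      have := hs ((y + x) / 2) ⟨by linarith, by linarith⟩
      simp at this
    have l1 : 0 < s * w y := lt_of_le_of_ne l1 (mul_ne_zero s0 (hsim y hy'.1 hy'.2)).symm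
    have l2 : s * w x < 0 := lt_of_le_of_ne l2 (mul_ne_zero s0 (hsim x hx'.1 hx'.2))
    have hprod : w y * w x < 0 := by
      have h1 : (s * s) * (w y * w x) < 0 := by nlinarith [mul_neg_of_pos_of_neg l1 l2]
      by_contra hcon
      push Not at hcon
      nlinarith [mul_nonneg (mul_self_nonneg s) hcon]
    have hg := h.gap hω hle hy'.1.1 hyx hx'.1.2 hy'.2 hx'.2 hs
    have hlen : x - y ≤ π / ω := by
      rcases le_total (π / ω) (x - y) with q | q
      · exact (hg q).1.le
      · exact q
    push_cast
    refine ⟨?_, by linarith, fun heq => ?_⟩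
    · have hyy : 0 < w y * w y := mul_self_pos.2 (hsim y hy'.1 hy'.2)
      have h2 : 0 < (w 0 * w y * (-1) ^ k) * -(w y * w x) := mul_pos i1 (by linarith)
      have h3 : (w 0 * w y * (-1) ^ k) * -(w y * w x) =
          (w y * w y) * (w 0 * w x * (-1) ^ (k + 1)) := by ring
      rw [h3] at h2
      exact (mul_pos_iff_of_pos_left hyy).1 h2
    · filter_upwards [i3 (by linarith), (hg (by linarith)).2] with t t1 t2 ht
      rcases le_total t y with q | q
      · exact t1 ⟨ht.1, q⟩
      · exact t2 ⟨q, ht.2⟩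

lemma good_of_sol {T : ℝ} (hT : 0 < T) {a u v : ℝ → ℝ} (hai : IntervalIntegrable a volume 0 T)
    (h : IsSolOn a u v 0 T) :
    ∃ w, Good T a u w ∧ ∀ x ∈ Icc 0 T, w x = v x := by
  obtain ⟨hu, hv⟩ := h
  have hcont : ContinuousOn u (Icc 0 T) := fun y hy => (hu y hy).continuousWithinAt
  have hi : IntervalIntegrable (fun t => a t * u t) volume 0 T :=
    hai.mul_continuousOn (by rwa [uIcc_of_le hT.le])
  set w : ℝ → ℝ := fun x => v 0 - ∫ t in (0:ℝ)..x, a t * u t with hw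
  have acw : AbsolutelyContinuousOnInterval w 0 T :=
    (ac_const _ _ _).fun_sub (hi.absolutelyContinuousOnInterval_intervalIntegral (by simp))
  have hwv : ∀ x ∈ Icc 0 T, w x = v x := fun x hx => (hv x hx).symm
  have du : ∀ x ∈ Icc 0 T, HasDerivWithinAt u (w x) (Icc 0 T) x := by
    intro x hx
    rw [hwv x hx]; exact hu x hx
  refine ⟨w, ⟨?_, acw, du, ?_⟩, hwv⟩
  · obtain ⟨C, hC⟩ := acw.exists_bound
    rw [uIcc_of_le hT.le] at hC
    have : LipschitzOnWith C.toNNReal u (Icc 0 T) := by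
      apply (convex_Icc 0 T).lipschitzOnWith_of_nnnorm_hasDerivWithin_le du
      intro x hx
      exact NNReal.le_toNNReal_of_coe_le (hC x hx)
    apply LipschitzOnWith.absolutelyContinuousOnInterval (K := C.toNNReal)
    rwa [uIcc_of_le hT.le]
  · filter_upwards [hi.ae_hasDerivAt_integral] with x hx hx'
    rw [uIcc_of_le hT.le] at hx
    exact (hx hx' 0 ⟨le_rfl, hT.le⟩).const_sub (v 0)

theorem stmt1 (T : ℝ) (hT : 0 < T) (n : ℕ) (hn : 1 ≤ n)
    (a : ℝ → ℝ) (ha : a ∈ LambdaN T n)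
    (u v : ℝ → ℝ) (hsol : PeriodicSol T a u v)
    (hnt : ∃ x ∈ Set.Icc 0 T, u x ≠ 0)
    (h0 : u 0 = 0) (hTz : u T = 0) :
    (Set.Ico 0 T ∩ {x | u x = 0}).Finite ∧
    Even (Set.Ico 0 T ∩ {x | u x = 0}).ncard ∧
    2 * (n + 1) ≤ (Set.Ico 0 T ∩ {x | u x = 0}).ncard := by
  obtain ⟨⟨-, -, hint⟩, ⟨hle, hpos⟩, -⟩ := ha
  obtain ⟨hs, -, hv⟩ := hsol
  have hai : IntervalIntegrable a volume 0 T :=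
    (intervalIntegrable_iff_integrableOn_Icc_of_le hT.le).2 hint
  obtain ⟨w, hgood, hwv⟩ := good_of_sol hT hai hs
  have m0 : (0:ℝ) ∈ Icc 0 T := ⟨le_rfl, hT.le⟩
  have mT : T ∈ Icc 0 T := ⟨hT.le, le_rfl⟩
  have hw0T : w 0 = w T := by rw [hwv 0 m0, hwv T mT, hv]
  obtain ⟨ω, hω⟩ : ∃ ω, ω = 2 * n * π / T := ⟨_, rfl⟩
  have hn' : (0:ℝ) < n := by exact_mod_cast hn
  have hωpos : 0 < ω := by rw [hω]; positivity
  have hlam : lam T n = ω ^ 2 := by rw [lam, hω]; ring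
  rw [hlam] at hle hpos
  rw [ae_restrict_iff' measurableSet_Icc] at hle
  have hsim : ∀ x ∈ Icc 0 T, u x = 0 → w x ≠ 0 := by
    intro x hx hux hwx
    obtain ⟨y, hy, hyne⟩ := hnt
    exact hyne (hgood.unique hT hai hx hux hwx y hy)
  have hfin := hgood.finite hsim
  have hZ : ∀ x, x ∈ hfin.toFinset ↔ x ∈ Icc 0 T ∧ u x = 0 := by
    intro x; simp
  have hset : Set.Ico 0 T ∩ {x | u x = 0} = ↑(hfin.toFinset.filter (· < T)) := by
    ext x
    simp only [mem_inter_iff, mem_Ico, mem_setOf_eq, Finset.coe_filter, hZ, mem_Icc]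
    constructor
    · rintro ⟨⟨p, q⟩, r⟩
      exact ⟨⟨⟨p, q.le⟩, r⟩, q⟩
    · rintro ⟨⟨⟨p, -⟩, r⟩, q⟩
      exact ⟨⟨p, q⟩, r⟩
  rw [hset, Set.ncard_coe_finset]
  obtain ⟨m, hm⟩ : ∃ m, (hfin.toFinset.filter (· < T)).card = m := ⟨_, rfl⟩
  obtain ⟨k1, k2, k3⟩ := hgood.step hωpos hle hsim h0 _ hZ m T ((hZ T).2 ⟨mT, hTz⟩) hm
  rw [hm]
  have heven : Even m := by
    by_contra hodd
    rw [Nat.not_even_iff_odd] at hodd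
    rw [hodd.neg_one_pow, ← hw0T] at k1
    nlinarith [mul_self_nonneg (w 0)]
  refine ⟨Finset.finite_toSet _, heven, ?_⟩
  have hgt : 2 * n < m := by
    by_contra hcon
    push Not at hcon
    have hpi : (2 * n : ℝ) * (π / ω) = T := by
      rw [hω]; field_simp
    have hpp : 0 < π / ω := div_pos pi_pos hωpos
    have hmn : (m : ℝ) ≤ 2 * n := by exact_mod_cast hcon
    have hTm : T = m * (π / ω) := by
      apply le_antisymm k2
      calc _ ≤ (2 * n : ℝ) * (π / ω) := by gcongr
        _ = T := hpi
    have hae := k3 hTm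
    apply hpos.ne'
    rw [← nonpos_iff_eq_zero, ← ae_iff.1 hae]
    apply measure_mono
    rintro x ⟨hx, hlt⟩ hcontra
    exact hlt.ne' (hcontra hx)
  obtain ⟨j, hj⟩ := heven
  omega
end

section
/- Let n ≥ 1 be a natural number. Then for every a ∈ Λ_n, the strict inequality ∫_0^T |a(x) − λ_{2n−1}| dx > (8πn(n+1)/T) · cot(nπ/(2(n+1))) holds. In particular, the infimum β_{1,n} = inf_{a ∈ Λ_n} ‖a − λ_{2n−1}‖_{L¹(0,T)} is not attained. -/
open MeasureTheory Set Real

/-- `f` is absolutely continuous on `[0,T]` with a.e. derivative `f'`. -/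
def ACD (T : ℝ) (f f' : ℝ → ℝ) : Prop :=
  AbsolutelyContinuousOnInterval f 0 T ∧ ∀ᵐ x, x ∈ Ioo 0 T → HasDerivAt f (f' x) x

lemma ac_congr {f g : ℝ → ℝ} {c d : ℝ} (hf : AbsolutelyContinuousOnInterval f c d)
    (h : ∀ x ∈ uIcc c d, f x = g x) : AbsolutelyContinuousOnInterval g c d := by
  unfold AbsolutelyContinuousOnInterval at *
  refine hf.congr' ?_
  refine Filter.Eventually.filter_mono inf_le_right ?_
  rw [Filter.eventually_principal]
  intro E hE
  refine Finset.sum_congr rfl fun i hi => ?_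
  rw [h _ (hE.1 i hi).1, h _ (hE.1 i hi).2]

lemma ac_comp {f G : ℝ → ℝ} {c d : ℝ} (hf : AbsolutelyContinuousOnInterval f c d)
    (hG : ContDiff ℝ 1 G) : AbsolutelyContinuousOnInterval (fun x => G (f x)) c d := by
  obtain ⟨C, hC⟩ := hf.exists_bound
  obtain ⟨K, hK⟩ := (hG.contDiffOn (s := Icc (-C) C)).exists_lipschitzOnWith (by decide)
    (convex_Icc _ _) isCompact_Icc
  have hm : ∀ x ∈ uIcc c d, f x ∈ Icc (-C) C := fun x hx => abs_le.1 (hC x hx)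
  unfold AbsolutelyContinuousOnInterval at *
  have h0 := hf.const_mul (K : ℝ)
  rw [mul_zero] at h0
  refine tendsto_of_tendsto_of_tendsto_of_le_of_le' tendsto_const_nhds h0 ?_ ?_
  · exact Filter.Eventually.of_forall fun E => Finset.sum_nonneg fun i _ => dist_nonneg
  · refine Filter.Eventually.filter_mono inf_le_right ?_
    rw [Filter.eventually_principal]
    intro E hE
    rw [Finset.mul_sum]
    refine Finset.sum_le_sum fun i hi => ?_
    exact hK.dist_le_mul _ (hm _ (hE.1 i hi).1) _ (hm _ (hE.1 i hi).2)

lemma ACD.comp {T : ℝ} {f f' G G' : ℝ → ℝ} (hf : ACD T f f') (hG : ∀ x, HasDerivAt G (G' x) x)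
    (hG' : Continuous G') : ACD T (fun x => G (f x)) (fun x => G' (f x) * f' x) := by
  refine ⟨ac_comp hf.1 ?_, ?_⟩
  · rw [contDiff_one_iff_deriv]
    refine ⟨fun x => (hG x).differentiableAt, ?_⟩
    have : deriv G = G' := funext fun x => (hG x).deriv
    rwa [this]
  · filter_upwards [hf.2] with x hx hxT
    exact (hG (f x)).comp x (hx hxT)

lemma ACD.mul {T : ℝ} {f f' g g' : ℝ → ℝ} (hf : ACD T f f') (hg : ACD T g g') :
    ACD T (fun x => f x * g x) (fun x => f' x * g x + f x * g' x) := by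
  refine ⟨hf.1.fun_mul hg.1, ?_⟩
  filter_upwards [hf.2, hg.2] with x h1 h2 hx
  exact (h1 hx).mul (h2 hx)

lemma ACD.add {T : ℝ} {f f' g g' : ℝ → ℝ} (hf : ACD T f f') (hg : ACD T g g') :
    ACD T (fun x => f x + g x) (fun x => f' x + g' x) := by
  refine ⟨hf.1.fun_add hg.1, ?_⟩
  filter_upwards [hf.2, hg.2] with x h1 h2 hx
  exact (h1 hx).add (h2 hx)

lemma ACD.const_mul {T : ℝ} {f f' : ℝ → ℝ} (c : ℝ) (hf : ACD T f f') :
    ACD T (fun x => c * f x) (fun x => c * f' x) := by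
  refine ⟨hf.1.const_mul c, ?_⟩
  filter_upwards [hf.2] with x h1 hx
  exact (h1 hx).const_mul c

lemma ACD.continuousOn {T : ℝ} (hT : 0 < T) {f f' : ℝ → ℝ} (hf : ACD T f f') :
    ContinuousOn f (Icc 0 T) := by
  have := hf.1.continuousOn
  rwa [uIcc_of_le hT.le] at this

lemma ae_Ioo_of_uIoc {T x y : ℝ} (hx : x ∈ Icc 0 T) (hy : y ∈ Icc 0 T) :
    ∀ᵐ t : ℝ, t ∈ uIoc x y → t ∈ Ioo 0 T := by
  have h1 : ∀ᵐ t : ℝ, t ≠ T := by simp [ae_iff, measure_singleton]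
  filter_upwards [h1] with t ht htx
  rw [mem_uIoc] at htx
  rcases htx with h | h
  · exact ⟨by linarith [hx.1, h.1], lt_of_le_of_ne (by linarith [hy.2, h.2]) ht⟩
  · exact ⟨by linarith [hy.1, h.1], lt_of_le_of_ne (by linarith [hx.2, h.2]) ht⟩

lemma ACD.integral {T : ℝ} {f f' : ℝ → ℝ} (hf : ACD T f f') {x y : ℝ}
    (hx : x ∈ Icc 0 T) (hy : y ∈ Icc 0 T) :
    IntervalIntegrable f' volume x y ∧ ∫ t in x..y, f' t = f y - f x := by
  have hT : 0 ≤ T := hx.1.trans hx.2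
  have hac : AbsolutelyContinuousOnInterval f x y := hf.1.mono (by
    rw [uIcc_of_le hT]; exact uIcc_subset_Icc hx hy)
  have hae : ∀ᵐ t : ℝ, t ∈ uIoc x y → deriv f t = f' t := by
    filter_upwards [ae_Ioo_of_uIoc hx hy, hf.2] with t h1 h2 ht
    exact (h2 (h1 ht)).deriv
  refine ⟨hac.intervalIntegrable_deriv.congr_ae ?_, ?_⟩
  · rw [Filter.EventuallyEq, ae_restrict_iff' measurableSet_uIoc]
    exact hae
  · rw [← hac.integral_deriv_eq_sub]
    refine (intervalIntegral.integral_congr_ae ?_).symm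
    exact hae

lemma ACD.of_integral {T : ℝ} (hT : 0 < T) {f f' : ℝ → ℝ}
    (hf' : IntervalIntegrable f' volume 0 T)
    (h : ∀ x ∈ Icc 0 T, f x = f 0 + ∫ t in (0:ℝ)..x, f' t) : ACD T f f' := by
  have hc : (0:ℝ) ∈ uIcc 0 T := left_mem_uIcc
  have h1 := hf'.absolutelyContinuousOnInterval_intervalIntegral hc
  have h2 : AbsolutelyContinuousOnInterval (fun x => f 0 + ∫ t in (0:ℝ)..x, f' t) 0 T := by
    have := ac_comp (G := fun y => f 0 + y) h1 (by fun_prop)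
    exact this
  refine ⟨ac_congr h2 fun x hx => ?_, ?_⟩
  · rw [uIcc_of_le hT.le] at hx
    exact (h x hx).symm
  · filter_upwards [hf'.ae_hasDerivAt_integral] with x hx hxT
    have h3 := (hx (by rw [uIcc_of_le hT.le]; exact Ioo_subset_Icc_self hxT) 0 hc).const_add (f 0)
    refine h3.congr_of_eventuallyEq ?_
    filter_upwards [isOpen_Ioo.mem_nhds hxT] with y hy
    exact h y (Ioo_subset_Icc_self hy)

lemma ACD.le_of_nonneg {T : ℝ} {f f' : ℝ → ℝ} (hf : ACD T f f') 
    (h0 : ∀ᵐ t : ℝ, t ∈ Ioo 0 T → 0 ≤ f' t) {x y : ℝ}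
    (hx : x ∈ Icc 0 T) (hy : y ∈ Icc 0 T) (hxy : x ≤ y) : f x ≤ f y := by
  obtain ⟨h1, h2⟩ := hf.integral hx hy
  have : 0 ≤ ∫ t in x..y, f' t := by
    refine intervalIntegral.integral_nonneg_of_ae_restrict hxy ?_
    have h3 := ae_Ioo_of_uIoc hx hy
    rw [uIoc_of_le hxy] at h3
    rw [Filter.EventuallyLE, ← restrict_Ioc_eq_restrict_Icc, ae_restrict_iff' measurableSet_Ioc]
    filter_upwards [h0, h3] with t h4 h5 h6
    exact h4 (h5 h6)
  linarith

lemma gronwall0 {T : ℝ} (hT : 0 < T) {E E' K : ℝ → ℝ} (hE : ACD T E E')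
    (hK : IntervalIntegrable K volume 0 T) (hpos : ∀ x ∈ Icc 0 T, 0 ≤ E x)
    (hb : ∀ᵐ t : ℝ, t ∈ Ioo 0 T → |E' t| ≤ K t * E t) {x₀ : ℝ} (hx₀ : x₀ ∈ Icc 0 T)
    (h0 : E x₀ = 0) : ∀ x ∈ Icc 0 T, E x = 0 := by
  have hA : ACD T (fun x => ∫ t in (0:ℝ)..x, K t) K :=
    ACD.of_integral hT hK (fun x _ => by simp)
  have hexp : ∀ c x : ℝ, HasDerivAt (fun y => rexp (c * y)) (c * rexp (c * x)) x := by
    intro c x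
    have := ((hasDerivAt_id x).const_mul c).exp
    simpa [mul_comm] using this
  have hP := hE.mul (hA.comp (hexp 1) (by fun_prop))
  have hM := (hE.mul (hA.comp (hexp (-1)) (by fun_prop))).const_mul (-1)
  intro x hx
  refine le_antisymm ?_ (hpos x hx)
  rcases le_total x x₀ with hxx | hxx
  · have := hP.le_of_nonneg (by
      filter_upwards [hb] with t ht htT
      have h1 := (abs_le.1 (ht htT)).1
      have h2 := Real.exp_pos (1 * ∫ t in (0:ℝ)..t, K t)
      have : 0 ≤ (E' t + K t * E t) * rexp (1 * ∫ t in (0:ℝ)..t, K t) :=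
        mul_nonneg (by linarith) h2.le
      linarith) hx hx₀ hxx
    simp only [h0, zero_mul] at this
    exact nonpos_of_mul_nonpos_left this (Real.exp_pos _)
  · have := hM.le_of_nonneg (by
      filter_upwards [hb] with t ht htT
      have h1 := (abs_le.1 (ht htT)).2
      have h2 := Real.exp_pos (-1 * ∫ t in (0:ℝ)..t, K t)
      have : 0 ≤ (K t * E t - E' t) * rexp (-1 * ∫ t in (0:ℝ)..t, K t) :=
        mul_nonneg (by linarith) h2.le
      linarith) hx₀ hx hxx
    simp only [h0, zero_mul, mul_zero] at this
    have h3 : E x * rexp (-1 * ∫ t in (0:ℝ)..x, K t) ≤ 0 := by linarith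
    exact nonpos_of_mul_nonpos_left h3 (Real.exp_pos _)

lemma sol_acd {T : ℝ} (hT : 0 < T) {a u v : ℝ → ℝ} (ha : IntervalIntegrable a volume 0 T)
    (h : IsSolOn a u v 0 T) : ACD T u v ∧ ACD T v (fun x => -(a x * u x)) := by
  have huc : ContinuousOn u (Icc 0 T) := fun x hx => (h.1 x hx).continuousWithinAt
  have hau : IntervalIntegrable (fun x => -(a x * u x)) volume 0 T := 
    (ha.mul_continuousOn (by rwa [uIcc_of_le hT.le])).neg
  have hv : ACD T v (fun x => -(a x * u x)) := by
    refine ACD.of_integral hT hau fun x hx => ?_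
    rw [h.2 x hx, intervalIntegral.integral_neg, sub_eq_add_neg]
  have hvc := hv.continuousOn hT
  refine ⟨ACD.of_integral hT (ContinuousOn.intervalIntegrable (by rwa [uIcc_of_le hT.le])) 
    fun x hx => ?_, hv⟩
  have hsub : Icc 0 x ⊆ Icc 0 T := Icc_subset_Icc_right hx.2
  rw [intervalIntegral.integral_eq_sub_of_hasDerivAt_of_le hx.1 (huc.mono hsub) (fun y hy => ?_)
    (ContinuousOn.intervalIntegrable (by rw [uIcc_of_le hx.1]; exact hvc.mono hsub))]
  · ring
  · have hy' : y ∈ Ioo 0 T := ⟨hy.1, hy.2.trans_le hx.2⟩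
    exact (h.1 y (Ioo_subset_Icc_self hy')).hasDerivAt (Icc_mem_nhds hy'.1 hy'.2)

lemma sol_ne {T : ℝ} (hT : 0 < T) {a u v : ℝ → ℝ} (ha : IntervalIntegrable a volume 0 T)
    (hu : ACD T u v) (hv : ACD T v (fun x => -(a x * u x))) (hne : ∃ x ∈ Icc 0 T, u x ≠ 0) :
    ∀ x ∈ Icc 0 T, 0 < u x ^ 2 + v x ^ 2 := by
  intro x hx
  by_contra hcon
  have h0 : u x * u x + v x * v x = 0 := by nlinarith [sq_nonneg (u x), sq_nonneg (v x)]
  have hE := (hu.mul hu).add (hv.mul hv)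
  have := gronwall0 hT (K := fun t => 1 + |a t|) hE 
    ((by simp : IntervalIntegrable (fun _ => (1:ℝ)) volume 0 T).add ha.abs)
    (fun x _ => add_nonneg (mul_self_nonneg _) (mul_self_nonneg _)) ?_ hx h0
  · obtain ⟨y, hy, hyne⟩ := hne
    have h1 := this y hy
    apply hyne
    nlinarith [mul_self_nonneg (u y), mul_self_nonneg (v y)]
  · refine Filter.Eventually.of_forall fun t _ => ?_
    have e : v t * u t + u t * v t + (-(a t * u t) * v t + v t * -(a t * u t)) 
      = (1 - a t) * (2 * (u t * v t)) := by ring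
    rw [e, abs_mul]
    have h1 : |1 - a t| ≤ 1 + |a t| := by simpa using abs_sub (1:ℝ) (a t)
    have h2 : |2 * (u t * v t)| ≤ u t * u t + v t * v t := by
      rw [abs_le]; constructor <;> nlinarith [sq_nonneg (u t + v t), sq_nonneg (u t - v t)]
    exact mul_le_mul h1 h2 (abs_nonneg _) (by positivity)

lemma pruefer {T ω : ℝ} (hT : 0 < T) (hω : 0 < ω) {a u v : ℝ → ℝ}
    (ha : IntervalIntegrable a volume 0 T) (h : PeriodicSol T a u v)
    (hne : ∃ x ∈ Icc 0 T, u x ≠ 0) :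
    ∃ φ θ : ℝ → ℝ, ACD T φ θ ∧ 
      (∀ x ∈ Icc 0 T, ω * (θ x - ω) = (a x - ω ^ 2) * sin (φ x) ^ 2) ∧
      ∃ k : ℤ, φ T - φ 0 = k * (2 * π) := by
  obtain ⟨hsol, hper, hper'⟩ := h
  obtain ⟨hu, hv⟩ := sol_acd hT ha hsol
  have hpos := sol_ne hT ha hu hv hne
  have hE : ∀ x ∈ Icc 0 T, 0 < ω ^ 2 * u x ^ 2 + v x ^ 2 := by
    intro x hx
    have h1 := hpos x hx
    by_contra hcon
    have h2 : 0 ≤ ω ^ 2 * u x ^ 2 := by positivity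
    have h3 : v x ^ 2 = 0 := by nlinarith [sq_nonneg (v x)]
    have h4 : 0 < ω ^ 2 * u x ^ 2 := mul_pos (by positivity) (by linarith)
    linarith
  have huc := hu.continuousOn hT
  have hvc := hv.continuousOn hT
  have hI : uIcc 0 T = Icc 0 T := uIcc_of_le hT.le
  set E : ℝ → ℝ := fun x => ω ^ 2 * u x ^ 2 + v x ^ 2 with hEdef
  have hEc : ContinuousOn E (Icc 0 T) := by
    simp only [hEdef]; fun_prop
  have hEne : ∀ x ∈ Icc 0 T, E x ≠ 0 := fun x hx => (hE x hx).ne'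
  set θ : ℝ → ℝ := fun x => ω * v x ^ 2 / E x + a x * (ω * u x ^ 2 / E x) with hθ
  have hθi : IntervalIntegrable θ volume 0 T := by
    refine IntervalIntegrable.add (ContinuousOn.intervalIntegrable ?_) (ha.mul_continuousOn ?_)
    · rw [hI]; exact ContinuousOn.div (by fun_prop) hEc hEne
    · rw [hI]; exact ContinuousOn.div (by fun_prop) hEc hEne
  set z : ℂ := ⟨v 0, ω * u 0⟩ with hz
  set r : ℝ := ‖z‖ with hr
  have h0m : (0:ℝ) ∈ Icc 0 T := left_mem_Icc.2 hT.le
  have hTm : T ∈ Icc 0 T := right_mem_Icc.2 hT.le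
  have hrpos : 0 < r := by
    rw [hr, norm_pos_iff]
    intro hz0
    have h1 : v 0 = 0 := by simpa [hz] using congrArg Complex.re hz0
    have h2 : ω * u 0 = 0 := by simpa [hz] using congrArg Complex.im hz0
    have h3 := hE 0 h0m
    have : ω ^ 2 * u 0 ^ 2 + v 0 ^ 2 = 0 := by rw [← mul_pow, h1, h2]; simp
    linarith
  have hc0 : r * cos z.arg = v 0 := Complex.norm_mul_cos_arg z
  have hs0 : r * sin z.arg = ω * u 0 := Complex.norm_mul_sin_arg z
  set φ : ℝ → ℝ := fun x => z.arg + ∫ t in (0:ℝ)..x, θ t with hφ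
  have hφ0 : φ 0 = z.arg := by simp [hφ]
  have hφd : ACD T φ θ := ACD.of_integral hT hθi (fun x _ => by rw [hφ0])
  have hcos := hφd.comp (G := cos) (G' := fun x => - sin x) (fun x => hasDerivAt_cos x) (by fun_prop)
  have hsin := hφd.comp (G := sin) (G' := cos) (fun x => hasDerivAt_sin x) (by fun_prop)
  have hD := ((hu.mul hcos).const_mul ω).add ((hv.mul hsin).const_mul (-1))
  have hF := hD.mul hD
  have hFz := gronwall0 hT (K := fun t => |(a t - ω ^ 2) * (2 * (u t * v t) / E t)|) hF ?_
    (fun x _ => mul_self_nonneg _) ?_ h0m ?_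
  rotate_left
  · refine IntervalIntegrable.abs ?_
    refine IntervalIntegrable.mul_continuousOn ?_ ?_
    · exact ha.sub (by simp)
    · rw [hI]; exact ContinuousOn.div (by fun_prop) hEc hEne
  · refine Filter.Eventually.of_forall fun t ht => ?_
    have hEt := hEne t (Ioo_subset_Icc_self ht)
    rw [← abs_of_nonneg (mul_self_nonneg (ω * (u t * cos (φ t)) + -1 * (v t * sin (φ t)))), ← abs_mul]
    apply le_of_eq
    rw [← abs_neg]
    congr 1
    simp only [hθ]
    field_simp
    simp only [hEdef]
    ring
  · rw [hφ0]
    have : ω * (u 0 * cos z.arg) + -1 * (v 0 * sin z.arg) = 0 := by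
      rw [← hc0]
      have : ω * (u 0 * cos z.arg) = (r * sin z.arg) * cos z.arg := by rw [hs0]; ring
      rw [this]; ring
    rw [this]; ring
  have hDz : ∀ x ∈ Icc 0 T, ω * u x * cos (φ x) = v x * sin (φ x) := by
    intro x hx
    have := mul_self_eq_zero.1 (hFz x hx)
    linarith
  refine ⟨φ, θ, hφd, ?_, ?_⟩
  · intro x hx
    have h1 := hDz x hx
    have hEx := hEne x hx
    have h2 : sin (φ x) ^ 2 = ω ^ 2 * u x ^ 2 / E x := by
      rw [eq_div_iff hEx]
      simp only [hEdef]
      have h3 := sin_sq_add_cos_sq (φ x)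
      have h4 : (ω * u x * cos (φ x)) ^ 2 = (v x * sin (φ x)) ^ 2 := by rw [h1]
      have h5 : cos (φ x) ^ 2 = 1 - sin (φ x) ^ 2 := by linarith
      simp only [mul_pow, h5] at h4
      linarith
    rw [h2]
    simp only [hθ]
    field_simp
    simp only [hEdef]
    ring
  · set H : ℝ → ℝ := fun x => v x * cos (φ x) + ω * u x * sin (φ x) with hH
    have hφc := hφd.continuousOn hT
    have hHc : ContinuousOn H (Icc 0 T) := by
      simp only [hH]
      exact (hvc.mul (continuous_cos.comp_continuousOn hφc)).add
        ((continuousOn_const.mul huc).mul (continuous_sin.comp_continuousOn hφc))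
    have hHne : ∀ x ∈ Icc 0 T, H x ≠ 0 := by
      intro x hx h0
      have h1 := hDz x hx
      have h2 := hE x hx
      have h3 := sin_sq_add_cos_sq (φ x)
      have h4 : H x ^ 2 + (ω * u x * cos (φ x) - v x * sin (φ x)) ^ 2 = E x := by
        simp only [hH, hEdef]
        linear_combination (ω ^ 2 * u x ^ 2 + v x ^ 2) * h3
      rw [h0, h1] at h4
      simp only [sub_self] at h4
      have : E x = 0 := by linarith
      exact hEne x hx this
    have hH0 : H 0 = r := by
      simp only [hH, hφ0, ← hc0, ← hs0]
      linear_combination r * sin_sq_add_cos_sq z.arg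
    have hHT : 0 < H T := by
      by_contra hcon
      have := intermediate_value_Icc' hT.le hHc
      obtain ⟨x, hx, hx0⟩ := this (⟨not_lt.1 hcon, by rw [hH0]; exact hrpos.le⟩ : (0:ℝ) ∈ Icc (H T) (H 0))
      exact hHne x hx hx0
    have hHT' : H T = r * cos (φ T - φ 0) := by
      simp only [hH]
      rw [← hper, ← hper', ← hc0, ← hs0, hφ0, cos_sub]
      ring
    have hsz : sin (φ T - φ 0) = 0 := by
      have := hDz T hTm
      rw [← hper, ← hper', ← hc0, ← hs0] at this
      have : r * sin (φ T - φ 0) = 0 := by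
        rw [sin_sub, hφ0]; linear_combination -this
      exact (mul_eq_zero.1 this).resolve_left hrpos.ne'
    have hcpos : 0 < cos (φ T - φ 0) := by
      rw [hHT'] at hHT
      exact pos_of_mul_pos_right hHT hrpos.le
    have hc1 : cos (φ T - φ 0) = 1 := by
      have := sin_sq_add_cos_sq (φ T - φ 0)
      rw [hsz] at this
      nlinarith
    obtain ⟨k, hk⟩ := (cos_eq_one_iff _).1 hc1
    exact ⟨k, hk.symm⟩

/-- The truncated weight `min (1/sin²) (1/cos² δ)`. -/
noncomputable def gw (δ x : ℝ) : ℝ := 1 / max (sin x ^ 2) (cos δ ^ 2)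

lemma gw_den {δ : ℝ} (hδ : 0 < cos δ) (x : ℝ) : 0 < max (sin x ^ 2) (cos δ ^ 2) :=
  lt_max_of_lt_right (by positivity)

lemma gw_cont {δ : ℝ} (hδ : 0 < cos δ) : Continuous (gw δ) := by
  unfold gw
  exact Continuous.div (by fun_prop) (by fun_prop) (fun x => (gw_den hδ x).ne')

lemma gw_nonneg {δ : ℝ} (hδ : 0 < cos δ) (x : ℝ) : 0 ≤ gw δ x := by
  unfold gw
  have := gw_den hδ x
  positivity

lemma gw_le {δ : ℝ} (hδ : 0 < cos δ) (x : ℝ) : gw δ x ≤ 1 / cos δ ^ 2 := by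
  unfold gw
  exact one_div_le_one_div_of_le (by positivity) (le_max_right _ _)

lemma gw_mul_le {δ : ℝ} (hδ : 0 < cos δ) (x : ℝ) : gw δ x * sin x ^ 2 ≤ 1 := by
  unfold gw
  rw [one_div, inv_mul_eq_div, div_le_one (gw_den hδ x)]
  exact le_max_left _ _

lemma gw_periodic (δ : ℝ) : Function.Periodic (gw δ) π := by
  intro x
  simp [gw, sin_add_pi]

lemma gw_integral {δ : ℝ} (h0 : 0 < δ) (h1 : δ < π / 2) :
    ∫ x in (0:ℝ)..π, gw δ x = 2 * tan δ + (π - 2 * δ) * (1 / cos δ ^ 2) := by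
  have hc : 0 < cos δ := cos_pos_of_mem_Ioo ⟨by linarith, h1⟩
  have hi : ∀ x y, IntervalIntegrable (gw δ) volume x y := fun x y =>
    (gw_cont hc).intervalIntegrable x y
  have hsmall : ∀ x, 0 ≤ x → x ≤ π → δ ≤ |x - π / 2| → gw δ x = 1 / cos δ ^ 2 := by
    intro x hx0 hx1 hx
    have h2 : sin x ≤ cos δ := by
      rw [← cos_pi_div_two_sub, ← cos_neg, neg_sub, ← cos_abs]
      refine cos_le_cos_of_nonneg_of_le_pi h0.le ?_ hx
      rw [abs_le]; constructor <;> linarith [pi_pos]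
    have h3 := sin_nonneg_of_nonneg_of_le_pi hx0 hx1
    unfold gw
    rw [max_eq_right (by gcongr)]
  have hbig : ∀ x, |x - π / 2| ≤ δ → cos δ ≤ sin x := by
    intro x hx
    rw [← cos_pi_div_two_sub, ← cos_neg (π / 2 - x), neg_sub, ← cos_abs (x - π / 2)]
    exact cos_le_cos_of_nonneg_of_le_pi (abs_nonneg _) (by linarith [pi_pos]) hx
  have e1 : ∫ x in (0:ℝ)..(π / 2 - δ), gw δ x = (π / 2 - δ) * (1 / cos δ ^ 2) := by
    rw [intervalIntegral.integral_congr (g := fun _ => 1 / cos δ ^ 2)]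
    · simp
    · intro x hx
      rw [uIcc_of_le (by linarith)] at hx
      refine hsmall x hx.1 (by linarith [hx.2]) ?_
      rw [abs_of_nonpos (by linarith [hx.2])]; linarith [hx.2]
  have e3 : ∫ x in (π / 2 + δ)..π, gw δ x = (π / 2 - δ) * (1 / cos δ ^ 2) := by
    rw [intervalIntegral.integral_congr (g := fun _ => 1 / cos δ ^ 2)]
    · simp only [intervalIntegral.integral_const, smul_eq_mul]; ring
    · intro x hx
      rw [uIcc_of_le (by linarith)] at hx
      refine hsmall x (by linarith [hx.1]) hx.2 ?_
      rw [abs_of_nonneg (by linarith [hx.1])]; linarith [hx.1]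
  have e2 : ∫ x in (π / 2 - δ)..(π / 2 + δ), gw δ x = 2 * tan δ := by
    rw [intervalIntegral.integral_eq_sub_of_hasDerivAt (f := fun x => - (cos x / sin x)) ?_ (hi _ _)]
    · rw [cos_add, sin_add, cos_sub, sin_sub, tan_eq_sin_div_cos]
      simp
      ring
    · intro x hx
      rw [uIcc_of_le (by linarith)] at hx
      have hb := hbig x (abs_le.2 ⟨by linarith [hx.1], by linarith [hx.2]⟩)
      have hs : 0 < sin x := by linarith
      have hd := ((hasDerivAt_cos x).div (hasDerivAt_sin x) hs.ne').neg
      refine hd.congr_deriv ?_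
      unfold gw
      rw [max_eq_left (by gcongr)]
      have := sin_sq_add_cos_sq x
      field_simp
      linarith
  rw [← intervalIntegral.integral_add_adjacent_intervals (hi 0 (π / 2 - δ)) (hi _ _),
    ← intervalIntegral.integral_add_adjacent_intervals (hi (π / 2 - δ) (π / 2 + δ)) (hi _ _), e1, e2, e3]
  ring

lemma lower_bound {T : ℝ} (hT : 0 < T) {n : ℕ} (hn : 1 ≤ n) {a : ℝ → ℝ} (ha : a ∈ LambdaN T n) :
    beta1 T n < ∫ x in (0:ℝ)..T, |a x - lam T n| := by
  obtain ⟨⟨-, -, hInt⟩, ⟨hle, hmeas⟩, u, v, hsol, hne⟩ := ha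
  have hn' : (1:ℝ) ≤ n := by exact_mod_cast hn
  have hai : IntervalIntegrable a volume 0 T := by
    rw [intervalIntegrable_iff_integrableOn_Icc_of_le hT.le]; exact hInt
  set ω : ℝ := 2 * π * n / T with hω
  have hωpos : 0 < ω := by have := pi_pos; positivity
  have hωT : ω * T = 2 * π * n := by rw [hω]; field_simp
  have hlam : lam T n = ω ^ 2 := by rw [lam, hω]; field_simp; ring
  simp only [hlam] at hle hmeas ⊢
  obtain ⟨φ, θ, hφ, hθ, k, hk⟩ := pruefer hT hωpos hai hsol hne
  have hφc := hφ.continuousOn hT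
  have h0m : (0:ℝ) ∈ Icc 0 T := left_mem_Icc.2 hT.le
  have hTm : T ∈ Icc 0 T := right_mem_Icc.2 hT.le
  have hae : ∀ᵐ x : ℝ, x ∈ Icc 0 T → ω ^ 2 ≤ a x := (ae_restrict_iff' measurableSet_Icc).1 hle
  -- the phase minus the linear part is monotone
  have hid : ACD T (fun x => x) (fun _ => 1) := ACD.of_integral hT (by simp) (fun x _ => by simp)
  have hψ := hφ.add (hid.const_mul (-ω))
  have hθle : ∀ᵐ x : ℝ, x ∈ Ioo 0 T → 0 ≤ θ x + -ω * 1 := by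
    filter_upwards [hae] with x hx hxT
    have hxI := Ioo_subset_Icc_self hxT
    have h1 := hθ x hxI
    have h2 : 0 ≤ ω * (θ x - ω) := by
      rw [h1]; exact mul_nonneg (by linarith [hx hxI]) (sq_nonneg _)
    have := nonneg_of_mul_nonneg_right h2 hωpos
    linarith
  have hmono : ∀ x ∈ Icc 0 T, ∀ y ∈ Icc 0 T, x < y → φ x < φ y := by
    intro x hx y hy hxy
    have := hψ.le_of_nonneg hθle hx hy hxy.le
    nlinarith
  have hinj : InjOn φ (Icc 0 T) := by
    intro x hx y hy hxy
    rcases lt_trichotomy x y with h | h | h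
    · exact absurd hxy (hmono x hx y hy h).ne
    · exact h
    · exact absurd hxy (hmono y hy x hx h).ne'
  have hcount : ({x | x ∈ Icc 0 T ∧ sin (φ x) = 0} : Set ℝ).Countable := by
    refine MapsTo.countable_of_injOn (f := φ) (t := range (fun m : ℤ => (m : ℝ) * π)) ?_ 
      (hinj.mono fun x hx => hx.1) (countable_range _)
    intro x hx
    obtain ⟨m, hm⟩ := sin_eq_zero_iff.1 hx.2
    exact ⟨m, hm⟩
  have hsne : ∀ᵐ x : ℝ, x ∈ Icc 0 T → sin (φ x) ≠ 0 := by
    filter_upwards [hcount.ae_notMem volume] with x hx hxI h0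
    exact hx ⟨hxI, h0⟩
  have hstrict : φ 0 + -ω * 0 < φ T + -ω * T := by
    refine lt_of_le_of_ne (hψ.le_of_nonneg hθle h0m hTm hT.le) fun heq => ?_
    obtain ⟨hi1, hi2⟩ := hψ.integral h0m hTm
    rw [← heq, sub_self] at hi2
    have hIoo : ∀ᵐ t : ℝ, t ∈ Ioc 0 T → t ∈ Ioo 0 T := by
      have := ae_Ioo_of_uIoc h0m hTm
      rwa [uIoc_of_le hT.le] at this
    have hz := (intervalIntegral.integral_eq_zero_iff_of_le_of_nonneg_ae hT.le (by
      rw [Filter.EventuallyLE, ae_restrict_iff' measurableSet_Ioc]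
      filter_upwards [hθle, hIoo] with x h1 h2 h3
      exact h1 (h2 h3)) hi1).1 hi2
    rw [Filter.EventuallyEq, ae_restrict_iff' measurableSet_Ioc] at hz
    have hnot : ∀ᵐ x : ℝ, ¬ (x ∈ {x ∈ Icc 0 T | ω ^ 2 < a x}) := by
      have h1 : ∀ᵐ t : ℝ, t ≠ 0 := by simp [ae_iff, measure_singleton]
      filter_upwards [hz, hsne, h1] with x hx1 hx2 hx3 hx4
      have hxI := hx4.1
      have h5 : θ x + -ω * 1 = 0 := hx1 ⟨lt_of_le_of_ne hxI.1 (Ne.symm hx3), hxI.2⟩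
      have h6 := hθ x hxI
      have h7 : θ x - ω = 0 := by linarith
      rw [h7, mul_zero] at h6
      have h8 : 0 < (a x - ω ^ 2) * sin (φ x) ^ 2 :=
        mul_pos (by linarith [hx4.2]) (by have := hx2 hxI; positivity)
      linarith
    have h9 := measure_eq_zero_iff_ae_notMem.2 hnot
    exact hmeas.ne' h9
  have hkn : (n : ℝ) + 1 ≤ k := by
    have h1 : (2 * π) * (n : ℝ) < (2 * π) * k := by linarith
    have h2 : (n : ℝ) < k := lt_of_mul_lt_mul_left h1 (by positivity)
    have h3 : (n : ℤ) < k := by exact_mod_cast h2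
    have h4 : (n : ℤ) + 1 ≤ k := h3
    exact_mod_cast h4
  -- the weight
  set δ : ℝ := π / (2 * (n + 1)) with hδ
  have hδpos : 0 < δ := by have := pi_pos; positivity
  have hδn : 2 * δ * (n + 1) = π := by rw [hδ]; field_simp
  have hδlt : δ < π / 2 := by nlinarith [pi_pos]
  have hc : 0 < cos δ := cos_pos_of_mem_Ioo ⟨by linarith [pi_pos], hδlt⟩
  have hI := gw_integral hδpos hδlt
  set M : ℝ := 1 / cos δ ^ 2 with hM
  have hGd : ∀ x, HasDerivAt (fun y => ∫ t in (0:ℝ)..y, gw δ t) (gw δ x) x := fun x =>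
    ((gw_cont hc).integral_hasStrictDerivAt 0 x).hasDerivAt
  have hG := hφ.comp hGd (gw_cont hc)
  obtain ⟨hGi, hGint⟩ := hG.integral h0m hTm
  have hGval : ∫ t in (0:ℝ)..T, gw δ (φ t) * θ t = 2 * k * ∫ x in (0:ℝ)..π, gw δ x := by
    rw [hGint, intervalIntegral.integral_interval_sub_left ((gw_cont hc).intervalIntegrable _ _)
      ((gw_cont hc).intervalIntegrable _ _)]
    have := (gw_periodic δ).intervalIntegral_add_zsmul_eq (2 * k) (φ 0) 
      (fun x y => (gw_cont hc).intervalIntegrable x y)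
    have e : φ 0 + (2 * k) • π = φ T := by
      rw [zsmul_eq_mul]; push_cast; linarith
    rw [e] at this
    rw [this, (gw_periodic δ).intervalIntegral_add_eq (φ 0) 0, zsmul_eq_mul, zero_add]
    push_cast; ring
  have hgc : ContinuousOn (fun x => gw δ (φ x)) (Icc 0 T) := (gw_cont hc).comp_continuousOn hφc
  have hgi : IntervalIntegrable (fun x => gw δ (φ x)) volume 0 T :=
    ContinuousOn.intervalIntegrable (by rwa [uIcc_of_le hT.le])
  -- strictness
  have hlt : ∫ x in (0:ℝ)..T, gw δ (φ x) < ∫ x in (0:ℝ)..T, M := by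
    refine intervalIntegral.integral_lt_integral_of_continuousOn_of_le_of_exists_lt hT hgc
      continuousOn_const (fun x _ => gw_le hc _) ?_
    have hlen : π ≤ φ T - φ 0 := by rw [hk]; nlinarith [pi_pos]
    obtain ⟨m, hm, -⟩ := existsUnique_add_zsmul_mem_Ico pi_pos (π / 2) (φ 0)
    rw [zsmul_eq_mul] at hm
    obtain ⟨x, hx, hx'⟩ := intermediate_value_Icc hT.le hφc 
      (⟨hm.1, by linarith [hm.2]⟩ : π / 2 + m * π ∈ Icc (φ 0) (φ T))
    refine ⟨x, hx, ?_⟩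
    rw [hx']
    have hs : sin (π / 2 + m * π) ^ 2 = 1 := by
      have h1 : cos (π / 2 + m * π) = 0 := cos_eq_zero_iff.2 ⟨m, by ring⟩
      have := sin_sq_add_cos_sq (π / 2 + m * π)
      rw [h1] at this
      linarith
    have hc1 : cos δ < 1 := by
      have := cos_lt_cos_of_nonneg_of_le_pi le_rfl (by linarith [pi_pos]) hδpos
      simpa using this
    have hc2 : cos δ ^ 2 < 1 := by nlinarith
    unfold gw
    rw [hs, max_eq_left hc2.le]
    exact one_div_lt_one_div_of_lt (by positivity) hc2
  simp only [intervalIntegral.integral_const, sub_zero, smul_eq_mul] at hlt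
  have hmain : ∫ x in (0:ℝ)..T, (ω * (gw δ (φ x) * θ x) - ω ^ 2 * gw δ (φ x)) ≤ 
      ∫ x in (0:ℝ)..T, |a x - ω ^ 2| := by
    refine intervalIntegral.integral_mono_ae_restrict hT.le 
      ((hGi.const_mul ω).sub (hgi.const_mul _)) (hai.sub (by simp)).abs ?_
    rw [Filter.EventuallyLE, ae_restrict_iff' measurableSet_Icc]
    filter_upwards [hae] with x hx hxI
    have h1 := hθ x hxI
    have h2 := hx hxI
    calc ω * (gw δ (φ x) * θ x) - ω ^ 2 * gw δ (φ x) 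
        = (a x - ω ^ 2) * (gw δ (φ x) * sin (φ x) ^ 2) := by linear_combination gw δ (φ x) * h1
      _ ≤ (a x - ω ^ 2) * 1 := mul_le_mul_of_nonneg_left (gw_mul_le hc _) (by linarith)
      _ ≤ |a x - ω ^ 2| := by rw [mul_one]; exact le_abs_self _
  rw [intervalIntegral.integral_sub (hGi.const_mul ω) (hgi.const_mul _), 
    intervalIntegral.integral_const_mul, intervalIntegral.integral_const_mul, hGval] at hmain
  have hIpos : 0 ≤ ∫ x in (0:ℝ)..π, gw δ x := 
    intervalIntegral.integral_nonneg pi_pos.le fun x _ => gw_nonneg hc x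
  have hbeta : beta1 T n = 4 * ω * (n + 1) * tan δ := by
    have e : (n : ℝ) * π / (2 * (n + 1)) = π / 2 - δ := by rw [hδ]; field_simp; ring
    rw [beta1, e, cot_eq_cos_div_sin, cos_pi_div_two_sub, sin_pi_div_two_sub, 
      ← tan_eq_sin_div_cos, hω]
    ring
  have hk2 : ω * (2 * (n + 1) * ∫ x in (0:ℝ)..π, gw δ x) ≤ ω * (2 * k * ∫ x in (0:ℝ)..π, gw δ x) := by
    gcongr
  have hlt2 : ω ^ 2 * ∫ x in (0:ℝ)..T, gw δ (φ x) < ω ^ 2 * (T * M) := by gcongr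
  have hfin : ω * (2 * (n + 1) * ∫ x in (0:ℝ)..π, gw δ x) - ω ^ 2 * (T * M) = beta1 T n := by
    rw [hI, hbeta]
    linear_combination (-ω * M) * hωT - 2 * ω * M * hδn
  linarith

lemma bump_exists {P ρ : ℝ} (hP : 0 < P) (hρ : 0 < ρ) (hρP : ρ < P / 2) :
    ∃ p : ℝ → ℝ, Continuous p ∧ Function.Antiperiodic p P ∧ (∀ x ∈ Icc 0 P, 0 ≤ p x) ∧
      (∀ x ∈ Icc 0 P, p x ≠ 0 → |x - P / 2| < ρ) ∧ 0 < p (P / 2) := by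
  have hr : 0 < cos (π * ρ / P) := by
    refine cos_pos_of_mem_Ioo ⟨?_, ?_⟩
    · have : 0 < π * ρ / P := by have := pi_pos; positivity
      linarith [pi_pos]
    · rw [div_lt_iff₀ hP]; nlinarith [pi_pos]
  have hs : ∀ x ∈ Icc 0 P, 0 ≤ sin (π * x / P) := by
    intro x hx
    refine sin_nonneg_of_nonneg_of_le_pi ?_ ?_
    · have := hx.1; have := pi_pos; positivity
    · rw [div_le_iff₀ hP]; exact mul_le_mul_of_nonneg_left hx.2 pi_pos.le
  have hpx : ∀ x ∈ Icc 0 P, max 0 (-sin (π * x / P) - cos (π * ρ / P)) = 0 := by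
    intro x hx
    exact max_eq_left (by linarith [hs x hx])
  refine ⟨fun x => max 0 (sin (π * x / P) - cos (π * ρ / P)) - 
    max 0 (-sin (π * x / P) - cos (π * ρ / P)), by fun_prop, ?_, ?_, ?_, ?_⟩
  · intro x
    have : π * (x + P) / P = π * x / P + π := by field_simp
    simp only [this, sin_add_pi, neg_neg]
    ring
  · intro x hx
    simp only [hpx x hx, sub_zero]
    exact le_max_left _ _
  · intro x hx hne
    simp only [hpx x hx, sub_zero] at hne
    by_contra hcon
    apply hne
    refine max_eq_left ?_
    have e : sin (π * x / P) = cos (π * |x - P / 2| / P) := by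
      have : π * |x - P / 2| / P = |π * x / P - π / 2| := by
        have : π * x / P - π / 2 = π * (x - P / 2) / P := by field_simp
        rw [this, abs_div, abs_mul, abs_of_pos pi_pos, abs_of_pos hP]
      rw [this, cos_abs, ← cos_neg, neg_sub, cos_pi_div_two_sub]
    have : cos (π * |x - P / 2| / P) ≤ cos (π * ρ / P) := by
      refine cos_le_cos_of_nonneg_of_le_pi (by have := pi_pos; positivity) ?_ ?_
      · rw [div_le_iff₀ hP]
        refine mul_le_mul_of_nonneg_left ?_ pi_pos.le
        rw [abs_le]; constructor <;> linarith [hx.1, hx.2]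
      · have := pi_pos
        have := not_lt.1 hcon
        gcongr
    linarith
  · have hm : P / 2 ∈ Icc 0 P := ⟨by linarith, by linarith⟩
    simp only [hpx _ hm, sub_zero]
    refine lt_max_of_lt_right ?_
    have e : π * (P / 2) / P = π / 2 := by field_simp
    rw [e, sin_pi_div_two]
    have := cos_lt_cos_of_nonneg_of_le_pi (x := 0) (y := π * ρ / P) le_rfl ?_ ?_
    · rw [cos_zero] at this; linarith
    · rw [div_le_iff₀ hP]; nlinarith [pi_pos]
    · have := pi_pos; positivity

/-- The antiperiodic solution of `u'' + ω² u = -2ω cos(ωP/2) p`. -/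
noncomputable def uu (ω P : ℝ) (p : ℝ → ℝ) (x : ℝ) : ℝ :=
  -∫ s in (0:ℝ)..P, sin (ω * (s - P / 2)) * p (x + s)

/-- The derivative of `uu`. -/
noncomputable def vv (ω P : ℝ) (p : ℝ → ℝ) (x : ℝ) : ℝ :=
  ω * ∫ s in (0:ℝ)..P, cos (ω * (s - P / 2)) * p (x + s)

lemma uu_anti (ω P : ℝ) {p : ℝ → ℝ} (hp : Function.Antiperiodic p P) :
    Function.Antiperiodic (uu ω P p) P := by
  intro x
  have : ∀ s, p (x + P + s) = - p (x + s) := fun s => by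
    rw [← hp (x + s)]; congr 1; ring
  simp [uu, this]

lemma vv_anti (ω P : ℝ) {p : ℝ → ℝ} (hp : Function.Antiperiodic p P) :
    Function.Antiperiodic (vv ω P p) P := by
  intro x
  have : ∀ s, p (x + P + s) = - p (x + s) := fun s => by
    rw [← hp (x + s)]; congr 1; ring
  simp [vv, this]

lemma shift_int (f p : ℝ → ℝ) (x P : ℝ) : ∫ s in (0:ℝ)..P, f s * p (x + s) =
    ∫ t in x..(x + P), f (t - x) * p t := by
  have := intervalIntegral.integral_comp_add_left (a := 0) (b := P) (fun t => f (t - x) * p t) x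
  simpa using this

lemma uu_vv_deriv {ω P : ℝ} {p : ℝ → ℝ} (hpc : Continuous p) (hp : Function.Antiperiodic p P)
    (x : ℝ) : HasDerivAt (uu ω P p) (vv ω P p x) x ∧
      HasDerivAt (vv ω P p) (-(ω ^ 2 * uu ω P p x + 2 * ω * cos (ω * (P / 2)) * p x)) x := by
  set S : ℝ → ℝ := fun y => ∫ t in (0:ℝ)..y, sin (ω * t) * p t with hS
  set K : ℝ → ℝ := fun y => ∫ t in (0:ℝ)..y, cos (ω * t) * p t with hK
  have hsc : Continuous fun t => sin (ω * t) * p t := by fun_prop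
  have hkc : Continuous fun t => cos (ω * t) * p t := by fun_prop
  have hSd : ∀ y, HasDerivAt S (sin (ω * y) * p y) y := fun y =>
    (hsc.integral_hasStrictDerivAt 0 y).hasDerivAt
  have hKd : ∀ y, HasDerivAt K (cos (ω * y) * p y) y := fun y =>
    (hkc.integral_hasStrictDerivAt 0 y).hasDerivAt
  have hSi : ∀ y, ∫ t in y..(y + P), sin (ω * t) * p t = S (y + P) - S y := fun y =>
    (intervalIntegral.integral_interval_sub_left (hsc.intervalIntegrable _ _)
      (hsc.intervalIntegrable _ _)).symm
  have hKi : ∀ y, ∫ t in y..(y + P), cos (ω * t) * p t = K (y + P) - K y := fun y =>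
    (intervalIntegral.integral_interval_sub_left (hkc.intervalIntegrable _ _)
      (hkc.intervalIntegrable _ _)).symm
  have hu : uu ω P p = fun y => sin (ω * (y + P / 2)) * (K (y + P) - K y) - 
      cos (ω * (y + P / 2)) * (S (y + P) - S y) := by
    funext y
    rw [uu, shift_int (fun s => sin (ω * (s - P / 2))), ← hSi, ← hKi, 
      ← intervalIntegral.integral_const_mul, ← intervalIntegral.integral_const_mul, 
      ← intervalIntegral.integral_sub, ← intervalIntegral.integral_neg]
    · refine intervalIntegral.integral_congr fun t _ => ?_
      have : ω * (t - y - P / 2) = ω * t - ω * (y + P / 2) := by ring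
      simp only [this, sin_sub]; ring
    · exact (hkc.const_mul _).intervalIntegrable _ _
    · exact (hsc.const_mul _).intervalIntegrable _ _
  have hv : vv ω P p = fun y => ω * (cos (ω * (y + P / 2)) * (K (y + P) - K y) + 
      sin (ω * (y + P / 2)) * (S (y + P) - S y)) := by
    funext y
    rw [vv, shift_int (fun s => cos (ω * (s - P / 2))), ← hSi, ← hKi]
    congr 1
    rw [← intervalIntegral.integral_const_mul, ← intervalIntegral.integral_const_mul, 
      ← intervalIntegral.integral_add]
    · refine intervalIntegral.integral_congr fun t _ => ?_
      have : ω * (t - y - P / 2) = ω * t - ω * (y + P / 2) := by ring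
      simp only [this, cos_sub]; ring
    · exact (hkc.const_mul _).intervalIntegrable _ _
    · exact (hsc.const_mul _).intervalIntegrable _ _
  have hlin : HasDerivAt (fun y => ω * (y + P / 2)) ω x := by
    simpa using ((hasDerivAt_id x).add_const (P / 2)).const_mul ω
  have hsin := hlin.sin
  have hcos := hlin.cos
  have e1 : ω * (x + P) = ω * (x + P / 2) + ω * (P / 2) := by ring
  have e2 : ω * x = ω * (x + P / 2) - ω * (P / 2) := by ring
  have hdS : HasDerivAt (fun y => S (y + P) - S y) 
      (-(2 * sin (ω * (x + P / 2)) * cos (ω * (P / 2)) * p x)) x := by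
    refine ((HasDerivAt.comp_add_const x P (hSd (x + P))).sub (hSd x)).congr_deriv ?_
    rw [hp x, e1, e2, sin_add, sin_sub]; ring
  have hdK : HasDerivAt (fun y => K (y + P) - K y) 
      (-(2 * cos (ω * (x + P / 2)) * cos (ω * (P / 2)) * p x)) x := by
    refine ((HasDerivAt.comp_add_const x P (hKd (x + P))).sub (hKd x)).congr_deriv ?_
    rw [hp x, e1, e2, cos_add, cos_sub]; ring
  constructor
  · rw [hv, hu]
    refine ((hsin.mul hdK).sub (hcos.mul hdS)).congr_deriv ?_
    ring
  · rw [hv, hu]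
    refine (((hcos.mul hdK).add (hsin.mul hdS)).const_mul ω).congr_deriv ?_
    linear_combination (-2 * ω * cos (ω * (P / 2)) * p x) * sin_sq_add_cos_sq (ω * (x + P / 2))

lemma uu_lower {ω P ρ : ℝ} (hω : 0 < ω) (hρP : 2 * ρ < P / 2)
    (hωP : ω * (P / 2) < π / 2) {p : ℝ → ℝ} (hpc : Continuous p) (hp : Function.Antiperiodic p P)
    (hp0 : ∀ x ∈ Icc 0 P, 0 ≤ p x) (hps : ∀ x ∈ Icc 0 P, p x ≠ 0 → |x - P / 2| < ρ) 
    {x : ℝ} (hx : x ∈ Icc 0 P) (hpx : p x ≠ 0) :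
    sin (ω * (P / 2 - 2 * ρ)) * ∫ t in (0:ℝ)..P, p t ≤ uu ω P p x := by
  have hxρ := abs_lt.1 (hps x hx hpx)
  have hfc : Continuous fun t => sin (ω * (P / 2 - (t - x))) * p t := by fun_prop
  have hgc : Continuous fun t => sin (ω * (P / 2 - (x - t))) * p t := by fun_prop
  have hmc : Continuous fun t => sin (ω * (P / 2 - 2 * ρ)) * p t := by fun_prop
  have hsin : ∀ d, 0 ≤ d → d ≤ 2 * ρ → sin (ω * (P / 2 - 2 * ρ)) ≤ sin (ω * (P / 2 - d)) := by
    intro d hd0 hd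
    refine sin_le_sin_of_le_of_le_pi_div_two ?_ ?_ ?_
    · have : 0 < ω * (P / 2 - 2 * ρ) := mul_pos hω (by linarith)
      linarith [pi_pos]
    · nlinarith
    · gcongr
  have hu : uu ω P p x = (∫ t in (0:ℝ)..x, sin (ω * (P / 2 - (x - t))) * p t) + 
      ∫ t in x..P, sin (ω * (P / 2 - (t - x))) * p t := by
    rw [uu, shift_int (fun s => sin (ω * (s - P / 2))), ← intervalIntegral.integral_neg]
    have e : ∀ t, -(sin (ω * (t - x - P / 2)) * p t) = sin (ω * (P / 2 - (t - x))) * p t := by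
      intro t
      rw [← neg_mul, ← sin_neg]; congr 2; ring
    simp only [e]
    rw [← intervalIntegral.integral_add_adjacent_intervals (b := P) (hfc.intervalIntegrable _ _)
      (hfc.intervalIntegrable _ _), add_comm]
    congr 1
    have := intervalIntegral.integral_comp_add_right (a := 0) (b := x) 
      (fun t => sin (ω * (P / 2 - (t - x))) * p t) P
    rw [zero_add] at this
    rw [← this]
    refine intervalIntegral.integral_congr fun t _ => ?_
    simp only [hp t]
    have : ω * (P / 2 - (t + P - x)) = -(ω * (P / 2 - (x - t))) := by ring
    rw [this, sin_neg]; ring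
  rw [hu, ← intervalIntegral.integral_const_mul, 
    ← intervalIntegral.integral_add_adjacent_intervals (b := x) (hmc.intervalIntegrable _ _)
      (hmc.intervalIntegrable _ _)]
  refine add_le_add ?_ ?_
  · refine intervalIntegral.integral_mono_on hx.1 (hmc.intervalIntegrable _ _) 
      (hgc.intervalIntegrable _ _) fun t ht => ?_
    have htI : t ∈ Icc 0 P := ⟨ht.1, ht.2.trans hx.2⟩
    by_cases h0 : p t = 0
    · simp [h0]
    · have := abs_lt.1 (hps t htI h0)
      exact mul_le_mul_of_nonneg_right (hsin _ (by linarith [ht.2]) (by linarith)) (hp0 t htI)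
  · refine intervalIntegral.integral_mono_on hx.2 (hmc.intervalIntegrable _ _) 
      (hfc.intervalIntegrable _ _) fun t ht => ?_
    have htI : t ∈ Icc 0 P := ⟨hx.1.trans ht.1, ht.2⟩
    by_cases h0 : p t = 0
    · simp [h0]
    · have := abs_lt.1 (hps t htI h0)
      exact mul_le_mul_of_nonneg_right (hsin _ (by linarith [ht.1]) (by linarith)) (hp0 t htI)

lemma construct {T : ℝ} (hT : 0 < T) {n : ℕ} (hn : 1 ≤ n) {P ω ρ : ℝ} 
    (hPdef : P = T / (2 * (n + 1))) (hωdef : ω = 2 * π * n / T) 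
    (hρ : 0 < ρ) (hρP : 2 * ρ < P / 2) :
    ∃ a ∈ LambdaN T n, ∫ x in (0:ℝ)..T, |a x - lam T n| ≤
      2 * (n + 1) * (2 * ω * cos (ω * (P / 2)) / sin (ω * (P / 2 - 2 * ρ))) := by
  have hn' : (1:ℝ) ≤ n := by exact_mod_cast hn
  have hpi := pi_pos
  have hP : 0 < P := by rw [hPdef]; positivity
  have hω : 0 < ω := by rw [hωdef]; positivity
  have hTP : (2 * (n + 1) : ℝ) * P = T := by rw [hPdef]; field_simp
  have hωP : ω * (P / 2) < π / 2 := by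
    rw [hPdef, hωdef]
    have : 2 * π * n / T * (T / (2 * (n + 1)) / 2) = π / 2 * (n / (n + 1)) := by field_simp
    rw [this]
    have h1 : (n : ℝ) / (n + 1) < 1 := by rw [div_lt_one (by positivity)]; linarith
    nlinarith
  have hlam : lam T n = ω ^ 2 := by rw [lam, hωdef]; field_simp; ring
  obtain ⟨p, hpc, hp, hp0, hps, hpL⟩ := bump_exists hP hρ (by linarith : ρ < P / 2)
  have hLm : P / 2 ∈ Icc 0 P := ⟨by linarith, by linarith⟩
  have hdv := fun x => uu_vv_deriv (ω := ω) hpc hp x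
  have hlow : ∀ x ∈ Icc 0 P, p x ≠ 0 → _ := fun x hx hpx => 
    uu_lower hω hρP hωP hpc hp hp0 hps hx hpx
  have hua := uu_anti ω P hp
  have hva := vv_anti ω P hp
  set u := uu ω P p with hu
  set v := vv ω P p with hv
  have huc : Continuous u := continuous_iff_continuousAt.2 fun x => (hdv x).1.continuousAt
  set c : ℝ := 2 * ω * cos (ω * (P / 2)) with hc
  have hcpos : 0 < c := by
    have : 0 < cos (ω * (P / 2)) := cos_pos_of_mem_Ioo ⟨by nlinarith, hωP⟩
    positivity
  set m : ℝ := sin (ω * (P / 2 - 2 * ρ)) with hm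
  have hmpos : 0 < m := by
    refine sin_pos_of_pos_of_lt_pi (mul_pos hω (by linarith)) ?_
    nlinarith
  set I : ℝ := ∫ t in (0:ℝ)..P, p t with hI
  have hIpos : 0 < I := 
    intervalIntegral.integral_pos hP hpc.continuousOn 
      (fun x hx => hp0 x (Ioc_subset_Icc_self hx)) ⟨P / 2, hLm, hpL⟩
  have hmI : 0 < m * I := mul_pos hmpos hIpos
  set b : ℝ → ℝ := fun x => c * p x / u x with hb
  have hbper : Function.Periodic b P := by
    intro x
    simp only [hb, hp x, hua x]
    rw [mul_neg, neg_div_neg_eq]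
  have hb0 : ∀ x ∈ Icc 0 P, 0 ≤ b x ∧ b x ≤ c / (m * I) * p x := by
    intro x hx
    by_cases h0 : p x = 0
    · simp [hb, h0]
    · have h1 := hlow x hx h0
      have h2 := hp0 x hx
      have h3 : 0 < u x := hmI.trans_le h1
      refine ⟨by simp only [hb]; positivity, ?_⟩
      simp only [hb]
      rw [div_mul_eq_mul_div]
      gcongr
  have hbu : ∀ x, b x * u x = c * p x := by
    have hper : Function.Periodic (fun x => b x * u x = c * p x) P := by
      intro x
      simp only [hbper x, hp x, hua x, mul_neg, neg_inj]
    intro x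
    obtain ⟨y, hy, hxy⟩ := hper.exists_mem_Ico₀ hP x
    rw [hxy]
    have hy' := Ico_subset_Icc_self hy
    by_cases h0 : p y = 0
    · simp [hb, h0]
    · have h3 : 0 < u y := hmI.trans_le (hlow y hy' h0)
      simp only [hb]
      field_simp
  have hbnn : ∀ x, 0 ≤ b x := by
    intro x
    obtain ⟨y, hy, hxy⟩ := hbper.exists_mem_Ico₀ hP x
    rw [hxy]; exact (hb0 y (Ico_subset_Icc_self hy)).1
  obtain ⟨B, hB⟩ := isCompact_Icc.exists_bound_of_continuousOn (hpc.continuousOn (s := Icc 0 P))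
  have hbB : ∀ x, ‖b x‖ ≤ c / (m * I) * B := by
    intro x
    obtain ⟨y, hy, hxy⟩ := hbper.exists_mem_Ico₀ hP x
    have hy' := Ico_subset_Icc_self hy
    rw [Real.norm_of_nonneg (hbnn x), hxy]
    refine (hb0 y hy').2.trans ?_
    have := le_trans (le_abs_self _) (hB y hy')
    gcongr
  have hbm : Measurable b := (hpc.measurable.const_mul c).div huc.measurable
  have hbi : ∀ x y, IntervalIntegrable b volume x y := by
    intro x y
    refine (intervalIntegrable_const (c := c / (m * I) * B)).mono_fun' hbm.aestronglyMeasurable ?_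
    exact Filter.Eventually.of_forall hbB
  have hbperT : Function.Periodic b T := by
    have := hbper.nat_mul (2 * (n + 1))
    push_cast at this
    rwa [hTP] at this
  have huT : Function.Periodic u T := by
    have := hua.periodic_two_mul.nat_mul (n + 1)
    push_cast at this
    have e : ((n:ℝ) + 1) * (2 * P) = T := by linarith
    rwa [e] at this
  have hvT : Function.Periodic v T := by
    have := hva.periodic_two_mul.nat_mul (n + 1)
    push_cast at this
    have e : ((n:ℝ) + 1) * (2 * P) = T := by linarith
    rwa [e] at this
  have huL : 0 < u (P / 2) := hmI.trans_le (hlow _ hLm hpL.ne')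
  have hPT : P ≤ T := by nlinarith
  refine ⟨fun x => ω ^ 2 + b x, ⟨⟨by fun_prop, fun x => by simp [hbperT x], ?_⟩, ⟨?_, ?_⟩, 
    u, v, ⟨⟨?_, ?_⟩, ?_, ?_⟩, ?_⟩, ?_⟩
  · rw [← intervalIntegrable_iff_integrableOn_Icc_of_le hT.le]
    exact intervalIntegrable_const.add (hbi 0 T)
  · refine Filter.Eventually.of_forall fun x => ?_
    simp only [hlam]
    linarith [hbnn x]
  · have hopen : IsOpen (Ioo 0 P ∩ p ⁻¹' (Ioi 0)) := isOpen_Ioo.inter (isOpen_Ioi.preimage hpc)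
    have hpos := hopen.measure_pos volume ⟨P / 2, ⟨by linarith, by linarith⟩, hpL⟩
    refine hpos.trans_le (measure_mono ?_)
    rintro x ⟨hx, hpx⟩
    have hx' := Ioo_subset_Icc_self hx
    have hpx' : 0 < p x := hpx
    refine ⟨⟨hx'.1, hx'.2.trans hPT⟩, ?_⟩
    have h3 : 0 < u x := hmI.trans_le (hlow x hx' hpx'.ne')
    have : 0 < b x := by simp only [hb]; positivity
    simp only [hlam]
    linarith
  · exact fun x _ => (hdv x).1.hasDerivWithinAt
  · intro x _
    have hInt : ∫ t in (0:ℝ)..x, -(ω ^ 2 * u t + c * p t) = v x - v 0 := by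
      refine intervalIntegral.integral_eq_sub_of_hasDerivAt (fun t _ => (hdv t).2) ?_
      exact Continuous.intervalIntegrable (by fun_prop) _ _
    rw [intervalIntegral.integral_neg] at hInt
    have e : ∀ t, (ω ^ 2 + b t) * u t = ω ^ 2 * u t + c * p t := fun t => by
      rw [← hbu t]; ring
    simp only [e]
    linarith
  · have := huT 0
    rw [zero_add] at this; exact this.symm
  · have := hvT 0
    rw [zero_add] at this; exact this.symm
  · exact ⟨P / 2, ⟨hLm.1, hLm.2.trans hPT⟩, huL.ne'⟩
  · have e : ∀ x, |ω ^ 2 + b x - lam T n| = b x := fun x => by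
      rw [hlam, add_sub_cancel_left, abs_of_nonneg (hbnn x)]
    simp only [e]
    have h1 := hbper.intervalIntegral_add_zsmul_eq (2 * (n + 1)) 0 hbi
    have e2 : (0:ℝ) + (2 * (n + 1) : ℤ) • P = T := by
      rw [zsmul_eq_mul]; push_cast; linarith
    rw [e2, zsmul_eq_mul, zero_add] at h1
    push_cast at h1
    rw [h1]
    have h2 : ∫ x in (0:ℝ)..P, b x ≤ ∫ x in (0:ℝ)..P, c / (m * I) * p x := by
      refine intervalIntegral.integral_mono_on hP.le (hbi _ _) 
        ((hpc.const_mul _).intervalIntegrable _ _) fun x hx => (hb0 x hx).2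
    rw [intervalIntegral.integral_const_mul] at h2
    have e3 : c / (m * I) * I = c / m := by field_simp
    rw [← hI, e3] at h2
    gcongr

lemma approx {T : ℝ} (hT : 0 < T) {n : ℕ} (hn : 1 ≤ n) {y : ℝ} (hy : beta1 T n < y) :
    ∃ a ∈ LambdaN T n, ∫ x in (0:ℝ)..T, |a x - lam T n| < y := by
  have hn' : (1:ℝ) ≤ n := by exact_mod_cast hn
  have hpi := pi_pos
  set P : ℝ := T / (2 * (n + 1)) with hPdef
  set ω : ℝ := 2 * π * n / T with hωdef
  have hP : 0 < P := by positivity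
  have e : ω * (P / 2) = n * π / (2 * (n + 1)) := by rw [hPdef, hωdef]; field_simp
  have hs : 0 < sin (ω * (P / 2)) := by
    rw [e]
    refine sin_pos_of_pos_of_lt_pi (by positivity) ?_
    rw [div_lt_iff₀ (by positivity)]; nlinarith
  set F : ℝ → ℝ := fun ρ => 
    2 * (n + 1) * (2 * ω * cos (ω * (P / 2)) / sin (ω * (P / 2 - 2 * ρ))) with hF
  have hF0 : F 0 = beta1 T n := by
    simp only [hF, beta1, mul_zero, sub_zero]
    rw [cot_eq_cos_div_sin, ← e, hωdef]
    ring
  have hFc : ContinuousAt F 0 := by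
    simp only [hF]
    refine continuousAt_const.mul (ContinuousAt.div continuousAt_const (by fun_prop) ?_)
    simpa using hs.ne'
  have h1 : ∀ᶠ ρ in nhdsWithin (0:ℝ) (Ioi 0), F ρ < y :=
    (hFc.eventually_lt continuousAt_const (by rw [hF0]; exact hy)).filter_mono nhdsWithin_le_nhds
  have h2 : ∀ᶠ ρ in nhdsWithin (0:ℝ) (Ioi 0), ρ ∈ Ioo 0 (P / 4) :=
    Ioo_mem_nhdsGT (by positivity)
  obtain ⟨ρ, hρ1, hρ2⟩ := (h1.and h2).exists
  obtain ⟨a, ha, hle⟩ := construct hT hn hPdef hωdef hρ2.1 (by linarith [hρ2.2])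
  exact ⟨a, ha, hle.trans_lt hρ1⟩

theorem stmt4 (T : ℝ) (hT : 0 < T) (n : ℕ) (hn : 1 ≤ n) :
    (∀ a ∈ LambdaN T n, beta1 T n < ∫ x in (0:ℝ)..T, |a x - lam T n|) ∧
    ¬ ∃ a ∈ LambdaN T n,
        (∫ x in (0:ℝ)..T, |a x - lam T n|) =
          sInf ((fun a : ℝ → ℝ => ∫ x in (0:ℝ)..T, |a x - lam T n|) '' LambdaN T n) := by
  refine ⟨fun a ha => lower_bound hT hn ha, ?_⟩
  rintro ⟨a, ha, heq⟩
  obtain ⟨a', ha', hlt⟩ := approx hT hn (lower_bound hT hn ha)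
  have hbdd : BddBelow ((fun a : ℝ → ℝ => ∫ x in (0:ℝ)..T, |a x - lam T n|) '' LambdaN T n) := by
    refine ⟨beta1 T n, ?_⟩
    rintro _ ⟨a, ha, rfl⟩
    exact (lower_bound hT hn ha).le
  have := csInf_le hbdd ⟨a', ha', rfl⟩
  rw [← heq] at this
  exact absurd hlt (not_lt.2 this)
end
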